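/- arXiv:2510.09929 — 5 statements merged into one kernel-verified Lean document; each statement's English description precedes it below -/
import Mathlib

section
/- Let α be a locally Lipschitz class K function and let R > 0. Then there exists L > 0 such that β_α(r,t) ≥ r·e^{−Lt} for all r ∈ [0,R] and all t ≥ 0. -/
open Set Filter MeasureTheory Topology

noncomputable section

/-- `α : [0,∞) → [0,∞)` is a class `K` function: continuous, strictly increasing, `α 0 = 0`. -/
def IsClassK (α : ℝ → ℝ) : Prop :=
  ContinuousOn α (Set.Ici 0) ∧ StrictMonoOn α (Set.Ici 0) ∧ α 0 = 0

/-- `α` is a locally Lipschitz class `K` function on `[0,∞)`. -/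
def IsLocallyLipschitzClassK (α : ℝ → ℝ) : Prop :=
  IsClassK α ∧
    ∀ x ∈ Set.Ici (0 : ℝ), ∃ K : NNReal, ∃ s ∈ nhdsWithin x (Set.Ici (0 : ℝ)),
      LipschitzOnWith K α s

/-- `β` is the function `β_α`: for each `r ≥ 0`, `t ↦ β r t` solves `y' = -α y`, `y 0 = r`,
staying in `[0, r]` for all `t ≥ 0`. -/
def IsBetaFor (α : ℝ → ℝ) (β : ℝ → ℝ → ℝ) : Prop :=
  ∀ r : ℝ, 0 ≤ r →
    β r 0 = r ∧ ∀ t : ℝ, 0 ≤ t →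
      0 ≤ β r t ∧ β r t ≤ r ∧ HasDerivWithinAt (β r) (-α (β r t)) (Set.Ici 0) t

/-- For every `R > 0` there is `L > 0` with `β_α r t ≥ r * exp (-L * t)`
for all `r ∈ [0,R]` and `t ≥ 0`. -/
theorem beta_exponential_lower_bound
    (α : ℝ → ℝ) (hα : IsLocallyLipschitzClassK α)
    (β : ℝ → ℝ → ℝ) (hβ : IsBetaFor α β)
    (R : ℝ) (hR : 0 < R) :
    ∃ L : ℝ, 0 < L ∧ ∀ r ∈ Set.Icc (0 : ℝ) R, ∀ t : ℝ, 0 ≤ t →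
      r * Real.exp (-L * t) ≤ β r t := by
  obtain ⟨⟨-, hmono, h0⟩, hlip⟩ := hα
  obtain ⟨K, s, hs, hK⟩ := hlip 0 (by simp)
  obtain ⟨ε, hε, hball⟩ := Metric.mem_nhdsWithin_iff.1 hs
  have hαR : 0 ≤ α R := by
    rw [← h0]
    exact hmono.monotoneOn (by simp) (by simpa using hR.le) hR.le
  have hq : 0 ≤ α R / ε := by positivity
  have hK0 : (0 : ℝ) ≤ K := K.2
  obtain ⟨L, hL⟩ : ∃ L : ℝ, L = K + α R / ε + 1 := ⟨_, rfl⟩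
  have hLpos : 0 < L := by rw [hL]; positivity
  have key : ∀ y, 0 ≤ y → y ≤ R → α y ≤ L * y := by
    intro y hy hyR
    rcases lt_or_ge y ε with h | h
    · have hy' : y ∈ s := hball ⟨by simpa [abs_of_nonneg hy] using h, hy⟩
      have h0' : (0 : ℝ) ∈ s := hball ⟨by simpa using hε, by simp⟩
      have h1 := hK.dist_le_mul y hy' 0 h0'
      rw [h0, Real.dist_eq, Real.dist_eq, sub_zero, sub_zero, abs_of_nonneg hy] at h1
      have h2 := le_abs_self (α y)
      have h3 : 0 ≤ α R / ε * y := mul_nonneg hq hy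
      rw [hL]
      nlinarith
    · have h1 : α y ≤ α R := hmono.monotoneOn hy (by simpa using hR.le) hyR
      have h2 : α R = α R / ε * ε := by field_simp
      have h3 : α R / ε * ε ≤ α R / ε * y := mul_le_mul_of_nonneg_left h hq
      have h4 : 0 ≤ (K : ℝ) * y := mul_nonneg hK0 hy
      rw [hL]
      nlinarith
  refine ⟨L, hLpos, ?_⟩
  intro r hr t ht
  obtain ⟨hb0, hb⟩ := hβ r hr.1
  have hexp : ∀ x : ℝ, HasDerivAt (fun x => Real.exp (L * x)) (Real.exp (L * x) * L) x := by
    intro x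
    have := ((hasDerivAt_id x).const_mul L).exp
    simpa using this
  have hd : ∀ x, 0 ≤ x → HasDerivWithinAt (fun x => β r x * Real.exp (L * x))
      (-α (β r x) * Real.exp (L * x) + β r x * (Real.exp (L * x) * L)) (Set.Ici 0) x :=
    fun x hx => (hb x hx).2.2.mul (hexp x).hasDerivWithinAt
  have hm : MonotoneOn (fun x => β r x * Real.exp (L * x)) (Set.Ici 0) := by
    refine monotoneOn_of_hasDerivWithinAt_nonneg (convex_Ici 0)
      (fun x hx => (hd x hx).continuousWithinAt)
      (fun x hx => (hd x (interior_subset hx)).mono interior_subset) ?_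
    intro x hx
    have hx0 : 0 ≤ x := interior_subset hx
    obtain ⟨h1, h2, -⟩ := hb x hx0
    have h3 := key _ h1 (h2.trans hr.2)
    have h4 := mul_nonneg (sub_nonneg.2 h3) (Real.exp_pos (L * x)).le
    nlinarith
  have h := hm (by simp : (0 : ℝ) ∈ Set.Ici 0) ht ht
  simp only [hb0, mul_zero, Real.exp_zero, mul_one] at h
  calc r * Real.exp (-L * t) ≤ β r t * Real.exp (L * t) * Real.exp (-L * t) :=
        mul_le_mul_of_nonneg_right h (Real.exp_pos _).le
    _ = β r t := by
        rw [mul_assoc, ← Real.exp_add]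
        simp
end
end

section
/- Let g : ℝ^n → [0,∞) be continuous, α be a locally Lipschitz class K function, and suppose v, w : ℝ^n × [0,∞) → [0,∞) are continuous and satisfy β_α(v(x,T), T) = w(x,T) for all (x,T) ∈ ℝ^n × [0,∞). Then w is a viscosity solution on ℝ^n × (0,∞) of max{ ∂_T w − H(x, ∇w), w − β_α(g(x), T) } = 0 if and only if v is a viscosity solution on ℝ^n × (0,∞) of max{ ∂_T v − H_α(x, v, ∇v), v − g(x) } = 0, where H(x,λ) = max_{u ∈ U} λ · f(x,u) and H_α(x,r,λ) = H(x,λ) + α(r). -/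
open Set Filter MeasureTheory Topology

noncomputable section

/-- `v` is a viscosity solution on `ℝⁿ × (0,∞)` of the HJ-PDE
`max { ∂_T v - H_α(x, v, ∇v), v - g x } = 0`, where
`H_α(x,r,λ) = max_{u ∈ U} λ · f(x,u) + α r`. -/
def IsViscositySolnCBVF {n m : ℕ} (f : (Fin n → ℝ) → (Fin m → ℝ) → Fin n → ℝ)
    (U : Set (Fin m → ℝ)) (α : ℝ → ℝ) (g : (Fin n → ℝ) → ℝ)
    (v : (Fin n → ℝ) × ℝ → ℝ) : Prop :=
  (∀ p : (Fin n → ℝ) × ℝ, 0 < p.2 →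
    ∀ φ : (Fin n → ℝ) × ℝ → ℝ, ContDiff ℝ 1 φ →
      IsLocalMax (fun q => v q - φ q) p →
      max (fderiv ℝ φ p ((0, 1) : (Fin n → ℝ) × ℝ) -
          (sSup ((fun u => fderiv ℝ φ p (f p.1 u, 0)) '' U) + α (v p)))
        (v p - g p.1) ≤ 0) ∧
  (∀ p : (Fin n → ℝ) × ℝ, 0 < p.2 →
    ∀ φ : (Fin n → ℝ) × ℝ → ℝ, ContDiff ℝ 1 φ →
      IsLocalMin (fun q => v q - φ q) p →
      0 ≤ max (fderiv ℝ φ p ((0, 1) : (Fin n → ℝ) × ℝ) -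
          (sSup ((fun u => fderiv ℝ φ p (f p.1 u, 0)) '' U) + α (v p)))
        (v p - g p.1))

/-- `w` is a viscosity solution on `ℝⁿ × (0,∞)` of the HJ-PDE
`max { ∂_T w - H(x, ∇w), w - β_α (g x) T } = 0`, where `H(x,λ) = max_{u ∈ U} λ · f(x,u)`. -/
def IsViscositySolnW {n m : ℕ} (f : (Fin n → ℝ) → (Fin m → ℝ) → Fin n → ℝ)
    (U : Set (Fin m → ℝ)) (β : ℝ → ℝ → ℝ) (g : (Fin n → ℝ) → ℝ)
    (w : (Fin n → ℝ) × ℝ → ℝ) : Prop :=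
  (∀ p : (Fin n → ℝ) × ℝ, 0 < p.2 →
    ∀ φ : (Fin n → ℝ) × ℝ → ℝ, ContDiff ℝ 1 φ →
      IsLocalMax (fun q => w q - φ q) p →
      max (fderiv ℝ φ p ((0, 1) : (Fin n → ℝ) × ℝ) -
          sSup ((fun u => fderiv ℝ φ p (f p.1 u, 0)) '' U))
        (w p - β (g p.1) p.2) ≤ 0) ∧
  (∀ p : (Fin n → ℝ) × ℝ, 0 < p.2 →
    ∀ φ : (Fin n → ℝ) × ℝ → ℝ, ContDiff ℝ 1 φ →
      IsLocalMin (fun q => w q - φ q) p →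
      0 ≤ max (fderiv ℝ φ p ((0, 1) : (Fin n → ℝ) × ℝ) -
          sSup ((fun u => fderiv ℝ φ p (f p.1 u, 0)) '' U))
        (w p - β (g p.1) p.2))

lemma classK_linear_bound {α : ℝ → ℝ} (hα : IsLocallyLipschitzClassK α) {R : ℝ} (hR : 0 ≤ R) :
    ∃ L : ℝ, 0 ≤ L ∧ ∀ y, 0 ≤ y → y ≤ R → α y ≤ L * y := by
  obtain ⟨⟨hc, hm, h0⟩, hl⟩ := hα
  obtain ⟨K, s, hs, hK⟩ := hl 0 (by simp)
  obtain ⟨δ, hδ, hsub⟩ := (mem_nhdsGE_iff_exists_Ico_subset).1 hs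
  have hδ0 : (0 : ℝ) < δ := hδ
  have hαR : 0 ≤ α R := by
    rw [← h0]; exact hm.monotoneOn (by simp) hR hR
  refine ⟨max K (α R / δ), le_max_of_le_left K.2, fun y hy hyR => ?_⟩
  rcases lt_or_ge y δ with h | h
  · have h1 := hK.dist_le_mul y (hsub ⟨hy, h⟩) 0 (hsub ⟨le_rfl, hδ0⟩)
    rw [Real.dist_eq, Real.dist_eq, h0, sub_zero, sub_zero, abs_of_nonneg hy] at h1
    calc α y ≤ |α y| := le_abs_self _
      _ ≤ K * y := h1
      _ ≤ _ := mul_le_mul_of_nonneg_right (le_max_left _ _) hy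
  · calc α y ≤ α R := hm.monotoneOn hy hR hyR
      _ = α R / δ * δ := by field_simp
      _ ≤ α R / δ * y := mul_le_mul_of_nonneg_left h (by positivity)
      _ ≤ _ := mul_le_mul_of_nonneg_right (le_max_right _ _) hy

lemma beta_lower {α : ℝ → ℝ} (hα : IsLocallyLipschitzClassK α) {β : ℝ → ℝ → ℝ}
    (hβ : IsBetaFor α β) {R : ℝ} (hR : 0 ≤ R) :
    ∃ L : ℝ, 0 ≤ L ∧ ∀ r, 0 ≤ r → r ≤ R → ∀ t, 0 ≤ t → r * Real.exp (-(L * t)) ≤ β r t := by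
  obtain ⟨L, hL, hb⟩ := classK_linear_bound hα hR
  refine ⟨L, hL, fun r hr hrR t ht => ?_⟩
  obtain ⟨hb0, hbt⟩ := hβ r hr
  have hd : ∀ s, 0 ≤ s → HasDerivWithinAt (fun s => β r s * Real.exp (L * s))
      (-α (β r s) * Real.exp (L * s) + β r s * (Real.exp (L * s) * (L * 1))) (Set.Ici 0) s := by
    intro s hs
    exact (hbt s hs).2.2.mul (((hasDerivAt_id s).const_mul L).exp.hasDerivWithinAt)
  have hmono : MonotoneOn (fun s => β r s * Real.exp (L * s)) (Set.Ici 0) := by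
    refine monotoneOn_of_hasDerivWithinAt_nonneg (convex_Ici 0)
      (fun s hs => (hd s hs).continuousWithinAt)
      (fun s hs => (hd s (interior_subset hs)).mono interior_subset) ?_
    intro s hs
    have hs' : 0 ≤ s := interior_subset hs
    obtain ⟨h1, h2, -⟩ := hbt s hs'
    have h3 := hb _ h1 (h2.trans hrR)
    have h4 := Real.exp_pos (L * s)
    nlinarith
  have h := hmono (by simp : (0 : ℝ) ∈ Set.Ici 0) ht ht
  simp only [hb0, mul_zero, Real.exp_zero, mul_one] at h
  calc r * Real.exp (-(L * t)) ≤ β r t * Real.exp (L * t) * Real.exp (-(L * t)) :=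
        mul_le_mul_of_nonneg_right h (Real.exp_pos _).le
    _ = β r t := by rw [mul_assoc, ← Real.exp_add]; simp

lemma beta_pos {α : ℝ → ℝ} (hα : IsLocallyLipschitzClassK α) {β : ℝ → ℝ → ℝ}
    (hβ : IsBetaFor α β) {r t : ℝ} (hr : 0 < r) (ht : 0 ≤ t) : 0 < β r t := by
  obtain ⟨L, hL, h⟩ := beta_lower hα hβ hr.le
  exact lt_of_lt_of_le (by positivity) (h r hr.le le_rfl t ht)

lemma classK_pos {α : ℝ → ℝ} (hα : IsLocallyLipschitzClassK α) {s : ℝ} (hs : 0 < s) :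
    0 < α s := by
  obtain ⟨⟨hc, hm, h0⟩, hl⟩ := hα
  rw [← h0]; exact hm (by simp) hs.le hs

/-- A primitive of `1/α`, which straightens the flow. -/
lemma exists_primitive {α : ℝ → ℝ} (hα : IsLocallyLipschitzClassK α) {β : ℝ → ℝ → ℝ}
    (hβ : IsBetaFor α β) :
    ∃ A : ℝ → ℝ, (∀ s, 0 < s → HasDerivAt A (α s)⁻¹ s) ∧ (∀ s, 0 < s → ContDiffAt ℝ 1 A s) ∧
      StrictMonoOn A (Set.Ioi 0) ∧
      ∀ r, 0 < r → ∀ t, 0 ≤ t → A (β r t) = A r - t := by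
  have hc : ContinuousOn (fun s => (α s)⁻¹) (Set.Ioi 0) :=
    (hα.1.1.mono Set.Ioi_subset_Ici_self).inv₀ fun s hs => (classK_pos hα hs).ne'
  have hA : ∀ s : ℝ, 0 < s → HasDerivAt (fun s => ∫ x in (1 : ℝ)..s, (α x)⁻¹) (α s)⁻¹ s := by
    intro s hs
    refine intervalIntegral.integral_hasDerivAt_right ?_ ?_ ?_
    · refine (hc.mono ?_).intervalIntegrable
      intro x hx
      exact lt_of_lt_of_le (lt_min one_pos hs) hx.1
    · exact hc.stronglyMeasurableAtFilter isOpen_Ioi _ hs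
    · exact hc.continuousAt (Ioi_mem_nhds hs)
  refine ⟨fun s => ∫ x in (1 : ℝ)..s, (α x)⁻¹, hA, ?_, ?_, ?_⟩
  · intro s hs
    have : ContDiffOn ℝ 1 (fun s => ∫ x in (1 : ℝ)..s, (α x)⁻¹) (Set.Ioi 0) := by
      rw [contDiffOn_one_iff_derivWithin isOpen_Ioi.uniqueDiffOn]
      refine ⟨fun x hx => (hA x hx).differentiableAt.differentiableWithinAt, ?_⟩
      refine hc.congr fun x hx => ?_
      rw [derivWithin_of_isOpen isOpen_Ioi hx, (hA x hx).deriv]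
    exact this.contDiffAt (Ioi_mem_nhds hs)
  · refine strictMonoOn_of_deriv_pos (convex_Ioi 0)
      (fun x hx => (hA x hx).continuousAt.continuousWithinAt) fun x hx => ?_
    have hx' : 0 < x := interior_subset hx
    rw [(hA x hx').deriv]
    exact inv_pos.2 (classK_pos hα hx')
  · intro r hr t ht
    generalize (fun s => ∫ x in (1 : ℝ)..s, (α x)⁻¹) = A at hA ⊢
    obtain ⟨hb0, hbt⟩ := hβ r hr.le
    have hd : ∀ s, 0 ≤ s → HasDerivWithinAt (fun s => A (β r s) + s) 0 (Set.Ici 0) s := by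
      intro s hs
      have hp := beta_pos hα hβ hr hs
      have h1 := ((hA _ hp).comp_hasDerivWithinAt s (hbt s hs).2.2).add
        (hasDerivWithinAt_id s (Set.Ici 0))
      have h2 : (α (β r s))⁻¹ * -α (β r s) + 1 = 0 := by
        have := (classK_pos hα hp).ne'
        field_simp
        ring
      rw [h2] at h1
      exact h1
    have := constant_of_has_deriv_right_zero (a := 0) (b := t) (f := fun s => A (β r s) + s)
      (fun s hs => ((hd s hs.1).continuousWithinAt).mono fun x hx => hx.1)
      (fun s hs => (hd s hs.1).mono fun x hx => le_trans hs.1 hx) t ⟨ht, le_rfl⟩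
    simp only [hb0, add_zero] at this
    linarith

lemma beta_zero {α : ℝ → ℝ} {β : ℝ → ℝ → ℝ} (hβ : IsBetaFor α β) {t : ℝ} (ht : 0 ≤ t) :
    β 0 t = 0 :=
  le_antisymm ((hβ 0 le_rfl).2 t ht).2.1 ((hβ 0 le_rfl).2 t ht).1

lemma beta_strictMono {α : ℝ → ℝ} (hα : IsLocallyLipschitzClassK α) {β : ℝ → ℝ → ℝ}
    (hβ : IsBetaFor α β) {t : ℝ} (ht : 0 ≤ t) : StrictMonoOn (fun r => β r t) (Set.Ici 0) := by
  obtain ⟨A, -, -, hA, hAb⟩ := exists_primitive hα hβ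
  intro a ha b hb hab
  have hb' : 0 < b := lt_of_le_of_lt ha hab
  rcases (show (0 : ℝ) ≤ a from ha).eq_or_lt with h | h
  · subst h
    simp only [beta_zero hβ ht]
    exact beta_pos hα hβ hb' ht
  · rw [← hA.lt_iff_lt (beta_pos hα hβ h ht) (beta_pos hα hβ hb' ht), hAb a h t ht, hAb b hb' t ht]
    have := hA h hb' hab
    linarith

lemma globalize {E : Type*} [NormedAddCommGroup E] [NormedSpace ℝ E] [HasContDiffBump E]
    [FiniteDimensional ℝ E]
    {ψ : E → ℝ} {p : E} (h : ContDiffAt ℝ 1 ψ p) :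
    ∃ φ : E → ℝ, ContDiff ℝ 1 φ ∧ φ =ᶠ[𝓝 p] ψ := by
  have h1 : ∀ᶠ q in 𝓝 p, ContDiffAt ℝ 1 ψ q := h.eventually (by simp)
  obtain ⟨ε, hε, hball⟩ := Metric.eventually_nhds_iff_ball.1 h1
  let b : ContDiffBump p := ⟨ε / 4, ε / 2, by positivity, by linarith⟩
  refine ⟨fun q => b q * ψ q, ?_, ?_⟩
  · rw [contDiff_iff_contDiffAt]
    intro x
    by_cases hx : x ∈ Metric.ball p ε
    · exact b.contDiffAt.mul (hball x hx)
    · have : x ∉ tsupport b := by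
        rw [b.tsupport_eq]
        intro hx'
        exact hx (Metric.closedBall_subset_ball (by simp only [b]; linarith) hx')
      have h0 := notMem_tsupport_iff_eventuallyEq.1 this
      refine (contDiffAt_const (c := (0 : ℝ))).congr_of_eventuallyEq ?_
      filter_upwards [h0] with q hq
      simp [hq]
  · filter_upwards [b.eventuallyEq_one] with q hq
    simp [hq]

/-- Transfer of test functions through the straightening map `A`. -/
lemma transfer {n : ℕ} {α A : ℝ → ℝ} (hpos : ∀ s, 0 < s → 0 < α s)
    (hA : ∀ s, 0 < s → HasDerivAt A (α s)⁻¹ s) (hAc : ∀ s, 0 < s → ContDiffAt ℝ 1 A s)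
    (hAm : StrictMonoOn A (Set.Ioi 0)) (c : ℝ) {v w : (Fin n → ℝ) × ℝ → ℝ}
    {p : (Fin n → ℝ) × ℝ}
    (hvw : ∀ᶠ q in 𝓝 p, 0 < v q ∧ 0 < w q ∧ A (w q) = A (v q) - c * q.2)
    {φ : (Fin n → ℝ) × ℝ → ℝ} (hφ : ContDiff ℝ 1 φ) :
    ∃ ψ : (Fin n → ℝ) × ℝ → ℝ, ContDiff ℝ 1 ψ ∧
      (∀ y t, fderiv ℝ ψ p (y, t) = α (w p) * ((α (v p))⁻¹ * fderiv ℝ φ p (y, t) - c * t)) ∧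
      (IsLocalMax (fun q => v q - φ q) p → IsLocalMax (fun q => w q - ψ q) p) ∧
      (IsLocalMin (fun q => v q - φ q) p → IsLocalMin (fun q => w q - ψ q) p) := by
  obtain ⟨hvp, hwp, hAp⟩ := hvw.self_of_nhds
  have hne : (α (w p))⁻¹ ≠ 0 := (inv_pos.2 (hpos _ hwp)).ne'
  let e : ℝ ≃L[ℝ] ℝ := ContinuousLinearEquiv.unitsEquivAut ℝ (Units.mk0 _ hne)
  have hf' : HasFDerivAt A (e : ℝ →L[ℝ] ℝ) (w p) := by
    have h1 := (hA _ hwp).hasFDerivAt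
    have h2 : (e : ℝ →L[ℝ] ℝ) = ContinuousLinearMap.toSpanSingleton ℝ (α (w p))⁻¹ := by
      ext
      simp [e]
    rw [h2]
    exact h1
  have hBc := (hAc _ hwp).to_localInverse hf' one_ne_zero
  have hBi := (hAc _ hwp).localInverse_apply_image hf' one_ne_zero
  have hBr : ∀ᶠ y in 𝓝 (A (w p)), A ((hAc _ hwp).localInverse hf' one_ne_zero y) = y :=
    ((hAc _ hwp).hasStrictFDerivAt' hf' one_ne_zero).eventually_right_inverse
  generalize (hAc _ hwp).localInverse hf' one_ne_zero = B at hBc hBi hBr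
  let φ1 : (Fin n → ℝ) × ℝ → ℝ := fun q => φ q - φ p + v p
  have hφ1 : ContDiff ℝ 1 φ1 := (hφ.sub contDiff_const).add contDiff_const
  have hφ1p : φ1 p = v p := by simp [φ1]
  let S : (Fin n → ℝ) × ℝ → ℝ := fun q => A (φ1 q) - c * q.2
  have hSp : S p = A (w p) := by simp only [S, hφ1p, hAp]
  have hSc : ContDiffAt ℝ 1 S p := by
    refine ContDiffAt.sub ?_ (contDiffAt_const.mul contDiffAt_snd)
    exact ContDiffAt.comp p (hφ1p ▸ hAc _ hvp) hφ1.contDiffAt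
  have hψ0 : ContDiffAt ℝ 1 (fun q => B (S q)) p :=
    ContDiffAt.comp p (hSp ▸ hBc) hSc
  obtain ⟨ψ, hψ, hψe⟩ := globalize hψ0
  have hψp : ψ p = w p := by rw [hψe.self_of_nhds]; simp only [hSp, hBi]
  have hψpos : ∀ᶠ q in 𝓝 p, 0 < ψ q :=
    hψ.continuous.continuousAt.eventually (lt_mem_nhds (hψp ▸ hwp))
  have hφpos : ∀ᶠ q in 𝓝 p, 0 < φ1 q :=
    hφ1.continuous.continuousAt.eventually (lt_mem_nhds (hφ1p ▸ hvp))
  have hAψ : ∀ᶠ q in 𝓝 p, A (ψ q) = A (φ1 q) - c * q.2 := by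
    have h1 : ∀ᶠ q in 𝓝 p, A (B (S q)) = S q :=
      hSc.continuousAt.eventually (hSp ▸ hBr)
    filter_upwards [h1, hψe] with q h2 h3
    rw [h3, h2]
  refine ⟨ψ, hψ, ?_, ?_, ?_⟩
  · intro y t
    have hl : HasFDerivAt (fun q => A (ψ q)) ((α (w p))⁻¹ • fderiv ℝ ψ p) p := by
      have h1 : HasDerivAt A (α (w p))⁻¹ (ψ p) := by rw [hψp]; exact hA _ hwp
      exact h1.comp_hasFDerivAt p (hψ.differentiable one_ne_zero p).hasFDerivAt
    have hr : HasFDerivAt (fun q : (Fin n → ℝ) × ℝ => A (φ1 q) - c * q.2)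
        ((α (v p))⁻¹ • fderiv ℝ φ p - c • ContinuousLinearMap.snd ℝ (Fin n → ℝ) ℝ) p := by
      have h1 : HasDerivAt A (α (v p))⁻¹ (φ1 p) := by rw [hφ1p]; exact hA _ hvp
      have h2 : HasFDerivAt φ1 (fderiv ℝ φ p) p :=
        ((hφ.differentiable one_ne_zero p).hasFDerivAt.sub_const _).add_const _
      exact (h1.comp_hasFDerivAt p h2).sub (hasFDerivAt_snd.const_mul c)
    have heq := hl.unique (hr.congr_of_eventuallyEq hAψ)
    have := congrArg (fun T => T (y, t)) heq
    simp at this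
    rw [← this]
    have := (hpos _ hwp).ne'
    field_simp
  · intro h
    filter_upwards [h, hvw, hψpos, hφpos, hAψ] with q h1 ⟨h2, h3, h4⟩ h5 h6 h7
    have h8 : v q ≤ φ1 q := by simp only [φ1]; linarith
    have h9 := (hAm.le_iff_le h2 h6).2 h8
    have h10 := (hAm.le_iff_le h3 h5).1 (by linarith)
    rw [hψp]; linarith
  · intro h
    filter_upwards [h, hvw, hψpos, hφpos, hAψ] with q h1 ⟨h2, h3, h4⟩ h5 h6 h7
    have h8 : φ1 q ≤ v q := by simp only [φ1]; linarith
    have h9 := (hAm.le_iff_le h6 h2).2 h8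
    have h10 := (hAm.le_iff_le h5 h3).1 (by linarith)
    rw [hψp]; linarith

lemma sSup_image_mul {ι : Type*} (U : Set ι) (F : ι → ℝ) {k : ℝ} (hk : 0 ≤ k) :
    sSup ((fun u => k * F u) '' U) = k * sSup (F '' U) := by
  have h := Real.sSup_smul_of_nonneg hk (F '' U)
  rw [smul_eq_mul] at h
  rw [← h, ← Set.image_smul, Set.image_image]
  simp only [smul_eq_mul]

/-- If `v, w : ℝⁿ × [0,∞) → [0,∞)` are continuous and
`β_α (v (x,T)) T = w (x,T)`, then `w` is a viscosity solution on `ℝⁿ × (0,∞)` of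
`max { ∂_T w - H(x,∇w), w - β_α (g x) T } = 0` iff `v` is a viscosity solution on
`ℝⁿ × (0,∞)` of `max { ∂_T v - H_α(x,v,∇v), v - g x } = 0`. -/
theorem v_w_viscosity_equivalence {n m : ℕ}
    (f : (Fin n → ℝ) → (Fin m → ℝ) → Fin n → ℝ) (U : Set (Fin m → ℝ))
    (hU : IsCompact U)
    (hf : ∃ K : NNReal, LipschitzOnWith K (Function.uncurry f) (Set.univ ×ˢ U))
    (α : ℝ → ℝ) (hα : IsLocallyLipschitzClassK α)
    (β : ℝ → ℝ → ℝ) (hβ : IsBetaFor α β)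
    (g : (Fin n → ℝ) → ℝ) (hg : Continuous g) (hg0 : ∀ x, 0 ≤ g x)
    (v w : (Fin n → ℝ) × ℝ → ℝ)
    (hvc : ContinuousOn v {p : (Fin n → ℝ) × ℝ | 0 ≤ p.2})
    (hwc : ContinuousOn w {p : (Fin n → ℝ) × ℝ | 0 ≤ p.2})
    (hv0 : ∀ p : (Fin n → ℝ) × ℝ, 0 ≤ p.2 → 0 ≤ v p)
    (hw0 : ∀ p : (Fin n → ℝ) × ℝ, 0 ≤ p.2 → 0 ≤ w p)
    (hvw : ∀ p : (Fin n → ℝ) × ℝ, 0 ≤ p.2 → β (v p) p.2 = w p) :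
    IsViscositySolnW f U β g w ↔ IsViscositySolnCBVF f U α g v := by
  obtain ⟨A, hA, hAc, hAm, hAb⟩ := exists_primitive hα hβ
  have hpos : ∀ s, 0 < s → 0 < α s := fun s hs => classK_pos hα hs
  have hα0 : α 0 = 0 := hα.1.2.2
  have hnear : ∀ p : (Fin n → ℝ) × ℝ, 0 < p.2 → ∀ᶠ q in 𝓝 p, 0 < q.2 := fun p hp =>
    continuous_snd.continuousAt.eventually (lt_mem_nhds hp)
  have hvcont : ∀ p : (Fin n → ℝ) × ℝ, 0 < p.2 → ContinuousAt v p := fun p hp =>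
    hvc.continuousAt ((hnear p hp).mono fun q hq => le_of_lt hq)
  -- the relation near points with `v p > 0`
  have hrel : ∀ p : (Fin n → ℝ) × ℝ, 0 < p.2 → 0 < v p →
      ∀ᶠ q in 𝓝 p, 0 < v q ∧ 0 < w q ∧ A (w q) = A (v q) - q.2 := by
    intro p hp hvp
    filter_upwards [hnear p hp, (hvcont p hp).eventually (lt_mem_nhds hvp)] with q h1 h2
    refine ⟨h2, ?_, ?_⟩
    · rw [← hvw q h1.le]; exact beta_pos hα hβ h2 h1.le
    · rw [← hvw q h1.le]; exact hAb _ h2 _ h1.le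
  have hrel1 : ∀ p : (Fin n → ℝ) × ℝ, 0 < p.2 → 0 < v p →
      ∀ᶠ q in 𝓝 p, 0 < v q ∧ 0 < w q ∧ A (w q) = A (v q) - 1 * q.2 := fun p hp hvp =>
    (hrel p hp hvp).mono fun q h => ⟨h.1, h.2.1, by linarith [h.2.2]⟩
  have hrel2 : ∀ p : (Fin n → ℝ) × ℝ, 0 < p.2 → 0 < v p →
      ∀ᶠ q in 𝓝 p, 0 < w q ∧ 0 < v q ∧ A (v q) = A (w q) - (-1) * q.2 := fun p hp hvp =>
    (hrel p hp hvp).mono fun q h => ⟨h.2.1, h.1, by linarith [h.2.2]⟩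
  have hwz : ∀ p : (Fin n → ℝ) × ℝ, 0 < p.2 → v p = 0 → w p = 0 := by
    intro p hp h
    rw [← hvw p hp.le, h, beta_zero hβ hp.le]
  have hle : ∀ p : (Fin n → ℝ) × ℝ, 0 < p.2 → (w p - β (g p.1) p.2 ≤ 0 ↔ v p - g p.1 ≤ 0) := by
    intro p hp
    rw [sub_nonpos, sub_nonpos, ← hvw p hp.le]
    exact (beta_strictMono hα hβ hp.le).le_iff_le (hv0 p hp.le) (hg0 _)
  have hge : ∀ p : (Fin n → ℝ) × ℝ, 0 < p.2 → (0 ≤ w p - β (g p.1) p.2 ↔ 0 ≤ v p - g p.1) := by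
    intro p hp
    rw [sub_nonneg, sub_nonneg, ← hvw p hp.le]
    exact (beta_strictMono hα hβ hp.le).le_iff_le (hg0 _) (hv0 p hp.le)
  -- at a zero of a nonnegative function, test functions from above have zero derivative
  have hflat : ∀ (z φ : (Fin n → ℝ) × ℝ → ℝ) (p : (Fin n → ℝ) × ℝ), 0 < p.2 → z p = 0 →
      (∀ q : (Fin n → ℝ) × ℝ, 0 ≤ q.2 → 0 ≤ z q) →
      IsLocalMax (fun q => z q - φ q) p → fderiv ℝ φ p = 0 := by
    intro z φ p hp hz hz0 hmax
    apply IsLocalMin.fderiv_eq_zero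
    filter_upwards [hmax, hnear p hp] with q h1 h2
    have := hz0 q h2.le
    linarith
  -- derivatives of transferred functions
  have hder1 : ∀ (p : (Fin n → ℝ) × ℝ) (φ ψ : (Fin n → ℝ) × ℝ → ℝ), 0 < v p → 0 < w p →
      (∀ y t, fderiv ℝ ψ p (y, t) =
        α (w p) * ((α (v p))⁻¹ * fderiv ℝ φ p (y, t) - 1 * t)) →
      fderiv ℝ ψ p ((0, 1) : (Fin n → ℝ) × ℝ) -
          sSup ((fun u => fderiv ℝ ψ p (f p.1 u, 0)) '' U) =
        (α (w p) * (α (v p))⁻¹) * (fderiv ℝ φ p ((0, 1) : (Fin n → ℝ) × ℝ) -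
          (sSup ((fun u => fderiv ℝ φ p (f p.1 u, 0)) '' U) + α (v p))) := by
    intro p φ ψ hvp hwp h
    have h1 := hpos _ hvp
    have h2 := hpos _ hwp
    have h3 : (fun u => fderiv ℝ ψ p (f p.1 u, 0)) =
        fun u => (α (w p) * (α (v p))⁻¹) * fderiv ℝ φ p (f p.1 u, 0) := by
      funext u; rw [h]; ring
    rw [h3, sSup_image_mul U _ (by positivity), h]
    field_simp
    ring
  have hder2 : ∀ (p : (Fin n → ℝ) × ℝ) (φ ψ : (Fin n → ℝ) × ℝ → ℝ), 0 < v p → 0 < w p →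
      (∀ y t, fderiv ℝ ψ p (y, t) =
        α (v p) * ((α (w p))⁻¹ * fderiv ℝ φ p (y, t) - (-1) * t)) →
      fderiv ℝ ψ p ((0, 1) : (Fin n → ℝ) × ℝ) -
          (sSup ((fun u => fderiv ℝ ψ p (f p.1 u, 0)) '' U) + α (v p)) =
        (α (v p) * (α (w p))⁻¹) * (fderiv ℝ φ p ((0, 1) : (Fin n → ℝ) × ℝ) -
          sSup ((fun u => fderiv ℝ φ p (f p.1 u, 0)) '' U)) := by
    intro p φ ψ hvp hwp h
    have h1 := hpos _ hvp
    have h2 := hpos _ hwp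
    have h3 : (fun u => fderiv ℝ ψ p (f p.1 u, 0)) =
        fun u => (α (v p) * (α (w p))⁻¹) * fderiv ℝ φ p (f p.1 u, 0) := by
      funext u; rw [h]; ring
    rw [h3, sSup_image_mul U _ (by positivity), h]
    field_simp
    ring
  have hk1 : ∀ p : (Fin n → ℝ) × ℝ, 0 < v p → 0 < w p → 0 < α (w p) * (α (v p))⁻¹ :=
    fun p h1 h2 => mul_pos (hpos _ h2) (inv_pos.2 (hpos _ h1))
  have hk2 : ∀ p : (Fin n → ℝ) × ℝ, 0 < v p → 0 < w p → 0 < α (v p) * (α (w p))⁻¹ :=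
    fun p h1 h2 => mul_pos (hpos _ h1) (inv_pos.2 (hpos _ h2))
  constructor
  · rintro ⟨hsub, hsup⟩
    refine ⟨fun p hp φ hφ hmax => ?_, fun p hp φ hφ hmin => ?_⟩
    · rcases (hv0 p hp.le).eq_or_lt with hz | hvp
      · have hd := hflat v φ p hp hz.symm hv0 hmax
        have hs : 0 ≤ sSup ((fun u => fderiv ℝ φ p (f p.1 u, 0)) '' U) :=
          Real.sSup_nonneg (by rintro _ ⟨u, -, rfl⟩; simp [hd])
        refine max_le ?_ ?_
        · rw [← hz, hα0, hd] at *
          simpa using hs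
        · rw [← hz]; linarith [hg0 p.1]
      · obtain ⟨-, hwp, -⟩ := (hrel p hp hvp).self_of_nhds
        obtain ⟨ψ, hψ, hd, hM, -⟩ := transfer hpos hA hAc hAm 1 (hrel1 p hp hvp) hφ
        have h := max_le_iff.1 (hsub p hp ψ hψ (hM hmax))
        rw [hder1 p φ ψ hvp hwp hd, hle p hp] at h
        exact max_le (nonpos_of_mul_nonpos_right h.1 (hk1 p hvp hwp)) h.2
    · rcases (hv0 p hp.le).eq_or_lt with hz | hvp
      · have hvz : v p = 0 := hz.symm
        have hwp := hwz p hp hvz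
        obtain ⟨L, hL, hlow⟩ := beta_lower hα hβ (zero_le_one' ℝ)
        set k := Real.exp (-(L * (p.2 + 1))) with hk
        have hk0 : 0 < k := Real.exp_pos _
        have hψ : ContDiff ℝ 1 (fun q => k * φ q) := contDiff_const.mul hφ
        have hm : IsLocalMin (fun q => w q - k * φ q) p := by
          have e1 : ∀ᶠ q in 𝓝 p, v q < 1 :=
            (hvcont p hp).eventually (gt_mem_nhds (by rw [hvz]; exact one_pos))
          have e2 : ∀ᶠ q : (Fin n → ℝ) × ℝ in 𝓝 p, q.2 < p.2 + 1 :=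
            continuous_snd.continuousAt.eventually (gt_mem_nhds (by linarith))
          filter_upwards [hmin, hnear p hp, e1, e2] with q h1 h2 h3 h4
          have h5 := hlow (v q) (hv0 q h2.le) h3.le q.2 h2.le
          rw [hvw q h2.le] at h5
          have h6 : k ≤ Real.exp (-(L * q.2)) := by
            rw [hk]; apply Real.exp_le_exp.2
            have := mul_le_mul_of_nonneg_left h4.le hL
            linarith
          have h7 := mul_le_mul_of_nonneg_left h6 (hv0 q h2.le)
          rw [hvz] at h1
          rw [hwp]
          nlinarith
        have h := hsup p hp _ hψ hm
        have hd : fderiv ℝ (fun q => k * φ q) p = k • fderiv ℝ φ p :=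
          fderiv_const_mul (hφ.differentiable one_ne_zero p) k
        rw [hd, le_max_iff, hge p hp] at h
        simp only [smul_apply, smul_eq_mul] at h
        rw [sSup_image_mul U _ hk0.le, ← mul_sub, mul_nonneg_iff_of_pos_left hk0] at h
        rw [le_max_iff, hvz, hα0, add_zero]
        rw [hvz] at h
        exact h
      · obtain ⟨-, hwp, -⟩ := (hrel p hp hvp).self_of_nhds
        obtain ⟨ψ, hψ, hd, -, hM⟩ := transfer hpos hA hAc hAm 1 (hrel1 p hp hvp) hφ
        have h := le_max_iff.1 (hsup p hp ψ hψ (hM hmin))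
        rw [hder1 p φ ψ hvp hwp hd, hge p hp, mul_nonneg_iff_of_pos_left (hk1 p hvp hwp)] at h
        exact le_max_iff.2 h
  · rintro ⟨hsub, hsup⟩
    refine ⟨fun p hp φ hφ hmax => ?_, fun p hp φ hφ hmin => ?_⟩
    · rcases (hv0 p hp.le).eq_or_lt with hz | hvp
      · have hd := hflat w φ p hp (hwz p hp hz.symm) hw0 hmax
        have hs : 0 ≤ sSup ((fun u => fderiv ℝ φ p (f p.1 u, 0)) '' U) :=
          Real.sSup_nonneg (by rintro _ ⟨u, -, rfl⟩; simp [hd])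
        refine max_le ?_ ?_
        · rw [hd] at *
          simpa using hs
        · rw [hle p hp, ← hz]; linarith [hg0 p.1]
      · obtain ⟨-, hwp, -⟩ := (hrel p hp hvp).self_of_nhds
        obtain ⟨ψ, hψ, hd, hM, -⟩ := transfer hpos hA hAc hAm (-1) (hrel2 p hp hvp) hφ
        have h := max_le_iff.1 (hsub p hp ψ hψ (hM hmax))
        rw [hder2 p φ ψ hvp hwp hd, ← hle p hp] at h
        exact max_le (nonpos_of_mul_nonpos_right h.1 (hk2 p hvp hwp)) h.2
    · rcases (hv0 p hp.le).eq_or_lt with hz | hvp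
      · have hvz : v p = 0 := hz.symm
        have hwp := hwz p hp hvz
        have hm : IsLocalMin (fun q => v q - φ q) p := by
          filter_upwards [hmin, hnear p hp] with q h1 h2
          have h3 := ((hβ (v q) (hv0 q h2.le)).2 q.2 h2.le).2.1
          rw [hvw q h2.le] at h3
          rw [hwp] at h1
          rw [hvz]
          linarith
        have h := hsup p hp φ hφ hm
        rw [show α (v p) = 0 by rw [hvz, hα0], add_zero, le_max_iff, ← hge p hp] at h
        exact le_max_iff.2 h
      · obtain ⟨-, hwp, -⟩ := (hrel p hp hvp).self_of_nhds
        obtain ⟨ψ, hψ, hd, -, hM⟩ := transfer hpos hA hAc hAm (-1) (hrel2 p hp hvp) hφ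
        have h := le_max_iff.1 (hsup p hp ψ hψ (hM hmin))
        rw [hder2 p φ ψ hvp hwp hd, ← hge p hp, mul_nonneg_iff_of_pos_left (hk2 p hvp hwp)] at h
        exact le_max_iff.2 h
end
end

section
/- Let g : ℝ^n → [0,∞) be continuous and α be a locally Lipschitz class K function. Define w : ℝ^n × [0,∞) → [0,∞) by w(x,T) = sup over pairs (u, ξ) of control signals u ∈ 𝕌 and admissible trajectories ξ from x under u of min_{t ∈ [0,T]} β_α(g(ξ(t)), T − t). Then w is continuous, satisfies w(·,0) = g, and is the unique continuous function ℝ^n × [0,∞) → [0,∞) with this initial condition that is a viscosity solution on ℝ^n × (0,∞) of max{ ∂_T w − H(x, ∇w), w − β_α(g(x), T) } = 0, where H(x,λ) = max_{u ∈ U} λ · f(x,u). -/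
open Set Filter MeasureTheory Topology

noncomputable section

/-- `u` is an admissible control signal: measurable, valued in `U` on `[0,∞)`. -/
def IsControl {m : ℕ} (U : Set (Fin m → ℝ)) (u : ℝ → Fin m → ℝ) : Prop :=
  Measurable u ∧ ∀ t : ℝ, 0 ≤ t → u t ∈ U

/-- `ξ` is an admissible trajectory from `x` under the control signal `u`. -/
def IsTrajectory {n m : ℕ} (f : (Fin n → ℝ) → (Fin m → ℝ) → Fin n → ℝ)
    (x : Fin n → ℝ) (u : ℝ → Fin m → ℝ) (ξ : ℝ → Fin n → ℝ) : Prop :=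
  Continuous ξ ∧ ∀ t : ℝ, 0 ≤ t → ξ t = x + ∫ s in (0 : ℝ)..t, f (ξ s) (u s)

/-- The anti-discounted payoff defining the CB-VF: the supremum over control signals `u`
and admissible trajectories `ξ` from `x` of `min_{t ∈ [0,T]} β_α (g (ξ t)) (T - t)`. -/
def cbvfPayoff {n m : ℕ} (f : (Fin n → ℝ) → (Fin m → ℝ) → Fin n → ℝ)
    (U : Set (Fin m → ℝ)) (β : ℝ → ℝ → ℝ) (g : (Fin n → ℝ) → ℝ)
    (x : Fin n → ℝ) (T : ℝ) : ℝ :=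
  sSup {y : ℝ | ∃ u ξ, IsControl U u ∧ IsTrajectory f x u ξ ∧
    y = sInf ((fun t => β (g (ξ t)) (T - t)) '' Set.Icc 0 T)}

/-- Integral form of the Gronwall inequality. -/
theorem aux_gronwall (h : ℝ → ℝ) (hh : Continuous h) (a K T : ℝ) (hK : 0 ≤ K)
    (hle : ∀ t ∈ Icc 0 T, h t ≤ a + K * ∫ s in (0:ℝ)..t, h s) :
    ∀ t ∈ Icc 0 T, h t ≤ a * Real.exp (K * t) := by
  intro t ht
  have hF : ∀ t, HasDerivAt (fun t => ∫ s in (0:ℝ)..t, h s) (h t) t := fun t =>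
    intervalIntegral.integral_hasDerivAt_right (hh.intervalIntegrable _ _)
      (hh.stronglyMeasurableAtFilter _ _) hh.continuousAt
  have hG : ∀ t, HasDerivAt (fun t => (a + K * ∫ s in (0:ℝ)..t, h s) * Real.exp (-(K * t)))
      ((K * h t) * Real.exp (-(K * t)) +
        (a + K * ∫ s in (0:ℝ)..t, h s) * (Real.exp (-(K * t)) * (-(K * 1)))) t := by
    intro t
    exact (((hF t).const_mul K).const_add a).mul ((((hasDerivAt_id t).const_mul K).neg).exp)
  have hanti : AntitoneOn (fun t => (a + K * ∫ s in (0:ℝ)..t, h s) * Real.exp (-(K * t)))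
      (Icc 0 T) := by
    apply antitoneOn_of_deriv_nonpos (convex_Icc 0 T)
    · exact fun t _ => (hG t).continuousAt.continuousWithinAt
    · exact fun t _ => (hG t).differentiableAt.differentiableWithinAt
    · intro t ht
      rw [interior_Icc] at ht
      rw [(hG t).deriv]
      have h1 := hle t ⟨ht.1.le, ht.2.le⟩
      have h2 : 0 < Real.exp (-(K * t)) := Real.exp_pos _
      have h3 : K * (h t - (a + K * ∫ s in (0:ℝ)..t, h s)) ≤ 0 :=
        mul_nonpos_of_nonneg_of_nonpos hK (by linarith)
      nlinarith
  have h0 := hanti (left_mem_Icc.2 (ht.1.trans ht.2)) ht ht.1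
  simp only [intervalIntegral.integral_same, mul_zero, add_zero, neg_zero, Real.exp_zero,
    mul_one] at h0
  have h1 := hle t ht
  have h2 : 0 < Real.exp (K * t) := Real.exp_pos _
  have h3 : Real.exp (-(K * t)) * Real.exp (K * t) = 1 := by
    rw [← Real.exp_add]; simp
  calc h t ≤ (a + K * ∫ s in (0:ℝ)..t, h s) := h1
    _ = (a + K * ∫ s in (0:ℝ)..t, h s) * Real.exp (-(K * t)) * Real.exp (K * t) := by
      rw [mul_assoc, h3, mul_one]
    _ ≤ a * Real.exp (K * t) := by gcongr

/-- Working hypotheses on the dynamics. -/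
structure FHyp {n m : ℕ} (f : (Fin n → ℝ) → (Fin m → ℝ) → Fin n → ℝ)
    (U : Set (Fin m → ℝ)) (K C : ℝ) : Prop where
  K0 : 0 ≤ K
  C0 : 0 ≤ C
  lip : ∀ x y, ∀ u ∈ U, ‖f x u - f y u‖ ≤ K * ‖x - y‖
  bd : ∀ u ∈ U, ‖f 0 u‖ ≤ C
  cont : ContinuousOn (Function.uncurry f) (Set.univ ×ˢ U)
  ne : U.Nonempty

section traj
variable {n m : ℕ} {f : (Fin n → ℝ) → (Fin m → ℝ) → Fin n → ℝ}
    {U : Set (Fin m → ℝ)} {K C : ℝ}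

theorem FHyp.growth (H : FHyp f U K C) (x : Fin n → ℝ) {u : Fin m → ℝ} (hu : u ∈ U) :
    ‖f x u‖ ≤ C + K * ‖x‖ := by
  have h1 := H.lip x 0 u hu
  have h2 := H.bd u hu
  have h3 : ‖f x u‖ ≤ ‖f x u - f 0 u‖ + ‖f 0 u‖ := by
    simpa using norm_add_le (f x u - f 0 u) (f 0 u)
  rw [sub_zero] at h1
  linarith

theorem FHyp.aesm (H : FHyp f U K C) {u : ℝ → Fin m → ℝ} (hu : IsControl U u)
    {ξ : ℝ → Fin n → ℝ} (hξ : Continuous ξ) {a b : ℝ} (ha : 0 ≤ a) (hb : 0 ≤ b) :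
    AEStronglyMeasurable (fun s => f (ξ s) (u s)) (volume.restrict (Set.uIoc a b)) := by
  obtain ⟨u0, hu0⟩ := H.ne
  set v : ℝ → Fin m → ℝ := fun s => if 0 ≤ s then u s else u0 with hv
  have hvm : Measurable v :=
    Measurable.ite measurableSet_Ici hu.1 measurable_const
  have hvU : ∀ s, v s ∈ U := by
    intro s
    by_cases hs : 0 ≤ s
    · simp [hv, hs, hu.2 s hs]
    · simp [hv, hs, hu0]
  have hmeas : Measurable (fun s => f (ξ s) (v s)) := by
    have h1 := (continuousOn_iff_continuous_domRestrict.1 H.cont).measurable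
    have h2 : Measurable (fun s : ℝ =>
        (⟨(ξ s, v s), ⟨trivial, hvU s⟩⟩ : (Set.univ ×ˢ U : Set ((Fin n → ℝ) × (Fin m → ℝ))))) :=
      (hξ.measurable.prodMk hvm).subtype_mk
    exact h1.comp h2
  refine (hmeas.aestronglyMeasurable).congr ?_
  refine (ae_restrict_iff' measurableSet_uIoc).2 (Eventually.of_forall fun s hs => ?_)
  have : 0 ≤ s := by
    rcases Set.mem_uIoc.1 hs with h | h
    · linarith [h.1]
    · linarith [h.1]
  simp [hv, this]

theorem uIoc_nonneg {a b s : ℝ} (ha : 0 ≤ a) (hb : 0 ≤ b) (hs : s ∈ Set.uIoc a b) : 0 ≤ s := by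
  rcases Set.mem_uIoc.1 hs with h | h
  · linarith [h.1]
  · linarith [h.1]

theorem FHyp.ii (H : FHyp f U K C) {u : ℝ → Fin m → ℝ} (hu : IsControl U u)
    {ξ : ℝ → Fin n → ℝ} (hξ : Continuous ξ) {a b : ℝ} (ha : 0 ≤ a) (hb : 0 ≤ b) :
    IntervalIntegrable (fun s => f (ξ s) (u s)) volume a b := by
  have hc : Continuous (fun s => C + K * ‖ξ s‖) := by fun_prop
  refine (hc.intervalIntegrable a b).mono_fun (H.aesm hu hξ ha hb) ?_
  refine (ae_restrict_iff' measurableSet_uIoc).2 (Eventually.of_forall fun s hs => ?_)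
  have := H.growth (ξ s) (hu.2 s (uIoc_nonneg ha hb hs))
  exact this.trans (le_abs_self _)

theorem FHyp.traj_zero {u : ℝ → Fin m → ℝ} {ξ : ℝ → Fin n → ℝ} {x : Fin n → ℝ}
    (h : IsTrajectory f x u ξ) : ξ 0 = x := by
  have := h.2 0 le_rfl
  simpa using this

theorem FHyp.traj_sub (H : FHyp f U K C) {u : ℝ → Fin m → ℝ} (hu : IsControl U u)
    {ξ : ℝ → Fin n → ℝ} {x : Fin n → ℝ}
    (h : IsTrajectory f x u ξ) {s t : ℝ} (hs : 0 ≤ s) (ht : 0 ≤ t) :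
    ξ t - ξ s = ∫ r in s..t, f (ξ r) (u r) := by
  rw [h.2 t ht, h.2 s hs, add_sub_add_left_eq_sub]
  exact intervalIntegral.integral_interval_sub_left (H.ii hu h.1 le_rfl ht) (H.ii hu h.1 le_rfl hs)

theorem FHyp.traj_bound (H : FHyp f U K C) {u : ℝ → Fin m → ℝ} (hu : IsControl U u)
    {ξ : ℝ → Fin n → ℝ} {x : Fin n → ℝ} (h : IsTrajectory f x u ξ) {T : ℝ} :
    ∀ t ∈ Icc 0 T, ‖ξ t‖ ≤ (‖x‖ + C * T) * Real.exp (K * T) := by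
  intro t ht
  have hT : 0 ≤ T := ht.1.trans ht.2
  have key := aux_gronwall (fun t => ‖ξ t‖) h.1.norm (‖x‖ + C * T) K T H.K0 ?_ t ht
  · refine key.trans ?_
    have := H.C0
    have := H.K0
    have := ht.2
    gcongr
  · intro t ht
    have hc : Continuous (fun s => ‖ξ s‖) := h.1.norm
    have h1 : ‖∫ s in (0:ℝ)..t, f (ξ s) (u s)‖ ≤ ∫ s in (0:ℝ)..t, (C + K * ‖ξ s‖) := by
      apply intervalIntegral.norm_integral_le_of_norm_le ht.1
      · exact Eventually.of_forall fun s hs => H.growth _ (hu.2 s hs.1.le)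
      · exact (by fun_prop : Continuous (fun s => C + K * ‖ξ s‖)).intervalIntegrable _ _
    rw [intervalIntegral.integral_add (by simp) ((hc.const_mul K).intervalIntegrable _ _),
      intervalIntegral.integral_const_mul, intervalIntegral.integral_const] at h1
    simp only [sub_zero, smul_eq_mul] at h1
    have h2 : ‖ξ t‖ ≤ ‖x‖ + ‖∫ s in (0:ℝ)..t, f (ξ s) (u s)‖ := by
      conv_lhs => rw [h.2 t ht.1]
      exact norm_add_le _ _
    have h3 : t * C ≤ C * T := by
      rw [mul_comm]; exact mul_le_mul_of_nonneg_left ht.2 H.C0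
    linarith

theorem FHyp.traj_lip (H : FHyp f U K C) {u : ℝ → Fin m → ℝ} (hu : IsControl U u)
    {ξ : ℝ → Fin n → ℝ} {x : Fin n → ℝ} (h : IsTrajectory f x u ξ) {T B : ℝ}
    (hB : ∀ t ∈ Icc 0 T, ‖ξ t‖ ≤ B) :
    ∀ s ∈ Icc 0 T, ∀ t ∈ Icc 0 T, ‖ξ t - ξ s‖ ≤ (C + K * B) * |t - s| := by
  intro s hs t ht
  rw [H.traj_sub hu h hs.1 ht.1]
  apply intervalIntegral.norm_integral_le_of_norm_le_const
  intro r hr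
  have hr' : r ∈ Icc 0 T := by
    rcases Set.mem_uIoc.1 hr with h | h
    · exact ⟨hs.1.trans h.1.le, h.2.trans ht.2⟩
    · exact ⟨ht.1.trans h.1.le, h.2.trans hs.2⟩
  refine (H.growth _ (hu.2 r hr'.1)).trans ?_
  have := mul_le_mul_of_nonneg_left (hB r hr') H.K0
  linarith

theorem FHyp.traj_dep (H : FHyp f U K C) {u : ℝ → Fin m → ℝ} (hu : IsControl U u)
    {ξ ξ' : ℝ → Fin n → ℝ} {x x' : Fin n → ℝ} (h : IsTrajectory f x u ξ)
    (h' : IsTrajectory f x' u ξ') {T : ℝ} :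
    ∀ t ∈ Icc 0 T, ‖ξ t - ξ' t‖ ≤ ‖x - x'‖ * Real.exp (K * T) := by
  intro t ht
  have hc : Continuous (fun s => ‖ξ s - ξ' s‖) := (h.1.sub h'.1).norm
  have key := aux_gronwall (fun t => ‖ξ t - ξ' t‖) hc ‖x - x'‖ K T H.K0 ?_ t ht
  · refine key.trans ?_
    have := H.K0
    have := ht.2
    gcongr
  · intro t ht
    have e : ξ t - ξ' t = (x - x') + ∫ s in (0:ℝ)..t, (f (ξ s) (u s) - f (ξ' s) (u s)) := by
      rw [intervalIntegral.integral_sub (H.ii hu h.1 le_rfl ht.1) (H.ii hu h'.1 le_rfl ht.1),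
        h.2 t ht.1, h'.2 t ht.1]
      abel
    have h1 : ‖∫ s in (0:ℝ)..t, (f (ξ s) (u s) - f (ξ' s) (u s))‖ ≤
        ∫ s in (0:ℝ)..t, K * ‖ξ s - ξ' s‖ := by
      apply intervalIntegral.norm_integral_le_of_norm_le ht.1
      · exact Eventually.of_forall fun s hs => H.lip _ _ _ (hu.2 s hs.1.le)
      · exact (hc.const_mul K).intervalIntegrable _ _
    rw [intervalIntegral.integral_const_mul] at h1
    show ‖ξ t - ξ' t‖ ≤ _
    rw [e]
    exact (norm_add_le _ _).trans (by linarith)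

theorem FHyp.traj_shift (H : FHyp f U K C) {u : ℝ → Fin m → ℝ} (hu : IsControl U u)
    {ξ : ℝ → Fin n → ℝ} {x : Fin n → ℝ} (h : IsTrajectory f x u ξ) {s : ℝ} (hs : 0 ≤ s) :
    IsControl U (fun t => u (t + s)) ∧
      IsTrajectory f (ξ s) (fun t => u (t + s)) (fun t => ξ (t + s)) := by
  refine ⟨⟨hu.1.comp (measurable_id.add_const s), fun t ht => hu.2 _ (by positivity)⟩,
    h.1.comp (continuous_id.add continuous_const), fun t ht => ?_⟩
  have h1 := H.traj_sub hu h hs (add_nonneg ht hs)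
  rw [intervalIntegral.integral_comp_add_right (fun r => f (ξ r) (u r)) s, zero_add, ← h1]
  abel

theorem FHyp.traj_concat (H : FHyp f U K C) {u u' : ℝ → Fin m → ℝ} (hu : IsControl U u)
    (hu' : IsControl U u')
    {ξ ξ' : ℝ → Fin n → ℝ} {x : Fin n → ℝ} {s : ℝ} (hs : 0 ≤ s) (h : IsTrajectory f x u ξ)
    (h' : IsTrajectory f (ξ s) u' ξ') :
    IsControl U (fun t => if t ≤ s then u t else u' (t - s)) ∧
      IsTrajectory f x (fun t => if t ≤ s then u t else u' (t - s))
        (fun t => if t ≤ s then ξ t else ξ' (t - s)) := by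
  have hc : IsControl U (fun t => if t ≤ s then u t else u' (t - s)) := by
    refine ⟨Measurable.ite measurableSet_Iic hu.1 (hu'.1.comp (measurable_id.sub_const s)), ?_⟩
    intro t ht
    by_cases hts : t ≤ s
    · simp [hts, hu.2 t ht]
    · simp only [hts, if_false]
      exact hu'.2 _ (by linarith)
  have hcont : Continuous (fun t => if t ≤ s then ξ t else ξ' (t - s)) := by
    refine Continuous.if_le h.1 (h'.1.comp (continuous_id.sub continuous_const))
      continuous_id continuous_const ?_
    intro t ht
    subst ht
    simp [FHyp.traj_zero h']
  refine ⟨hc, hcont, ?_⟩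
  have e1 : ∀ t, 0 ≤ t → t ≤ s → (∫ r in (0:ℝ)..t, f (if r ≤ s then ξ r else ξ' (r - s))
      (if r ≤ s then u r else u' (r - s))) = ∫ r in (0:ℝ)..t, f (ξ r) (u r) := by
    intro t ht hts
    apply intervalIntegral.integral_congr_ae
    refine Eventually.of_forall fun r hr => ?_
    rw [uIoc_of_le ht] at hr
    simp [hr.2.trans hts]
  intro t ht
  by_cases hts : t ≤ s
  · simp only [hts, if_true]
    rw [e1 t ht hts, h.2 t ht]
  · simp only [hts, if_false]
    push Not at hts
    have e2 : (∫ r in s..t, f (if r ≤ s then ξ r else ξ' (r - s))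
      (if r ≤ s then u r else u' (r - s))) = ∫ r in s..t, f (ξ' (r - s)) (u' (r - s)) := by
      apply intervalIntegral.integral_congr_ae
      refine Eventually.of_forall fun r hr => ?_
      rw [uIoc_of_le hts.le] at hr
      simp [not_le.2 hr.1]
    rw [← intervalIntegral.integral_add_adjacent_intervals (H.ii hc hcont le_rfl hs)
      (H.ii hc hcont hs ht), e1 s hs le_rfl, e2,
      intervalIntegral.integral_comp_sub_right (fun r => f (ξ' r) (u' r)) s, sub_self,
      h'.2 _ (by linarith : 0 ≤ t - s), h.2 s hs, add_assoc]

theorem aux_exp_int {L t : ℝ} (hL : 0 < L) :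
    ∫ s in (0:ℝ)..t, Real.exp (L * s) ≤ Real.exp (L * t) / L := by
  have hd : ∀ s ∈ Set.uIcc 0 t, HasDerivAt (fun s => Real.exp (L * s) / L) (Real.exp (L * s)) s := by
    intro s _
    have hLpos' : L ≠ 0 := hL.ne'
    have := (((hasDerivAt_id s).const_mul L).exp).div_const L
    refine this.congr_deriv ?_
    rw [mul_one, mul_div_assoc, div_self hLpos', mul_one]
    rfl
  have hc : Continuous (fun s => Real.exp (L * s)) := by fun_prop
  rw [intervalIntegral.integral_eq_sub_of_hasDerivAt hd (hc.intervalIntegrable _ _)]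
  have : 0 < Real.exp (L * 0) / L := by positivity
  linarith

theorem FHyp.ii' (H : FHyp f U K C) {u : ℝ → Fin m → ℝ} (hu : Measurable u) (huU : ∀ t, u t ∈ U)
    {ξ : ℝ → Fin n → ℝ} (hξ : Continuous ξ) (a b : ℝ) :
    IntervalIntegrable (fun s => f (ξ s) (u s)) volume a b := by
  have hc : Continuous (fun s => C + K * ‖ξ s‖) := by fun_prop
  have hmeas : Measurable (fun s => f (ξ s) (u s)) := by
    have h1 := (continuousOn_iff_continuous_domRestrict.1 H.cont).measurable
    have h2 : Measurable (fun s : ℝ =>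
        (⟨(ξ s, u s), ⟨trivial, huU s⟩⟩ : (Set.univ ×ˢ U : Set ((Fin n → ℝ) × (Fin m → ℝ))))) :=
      (hξ.measurable.prodMk hu).subtype_mk
    exact h1.comp h2
  refine (hc.intervalIntegrable a b).mono_fun hmeas.aestronglyMeasurable ?_
  exact Eventually.of_forall fun s => (H.growth (ξ s) (huU s)).trans (le_abs_self _)

/-- Existence of trajectories for measurable controls. -/
theorem FHyp.traj_exists (H : FHyp f U K C) {u : ℝ → Fin m → ℝ} (hu : IsControl U u)
    (x : Fin n → ℝ) : ∃ ξ, IsTrajectory f x u ξ := by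
  obtain ⟨u0, hu0⟩ := H.ne
  set v : ℝ → Fin m → ℝ := fun s => if 0 ≤ s then u s else u0 with hv
  have hvm : Measurable v :=
    Measurable.ite measurableSet_Ici hu.1 measurable_const
  have hvU : ∀ s, v s ∈ U := by
    intro s
    by_cases hs : 0 ≤ s
    · simp [hv, hs, hu.2 s hs]
    · simp [hv, hs, hu0]
  set L : ℝ := 2 * K + 1 with hL
  have hK0 := H.K0
  have hC0 := H.C0
  have hLpos : 0 < L := by positivity
  -- the integrand
  let E : (BoundedContinuousFunction ℝ (Fin n → ℝ)) → ℝ → (Fin n → ℝ) :=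
    fun ζ s => Real.exp (L * s) • ζ s
  have hE : ∀ ζ, Continuous (E ζ) := fun ζ => by
    have := ζ.continuous
    show Continuous (fun s => Real.exp (L * s) • ζ s)
    fun_prop
  have hii : ∀ ζ a b, IntervalIntegrable (fun s => f (E ζ s) (v s)) volume a b :=
    fun ζ a b => H.ii' hvm hvU (hE ζ) a b
  let P : (BoundedContinuousFunction ℝ (Fin n → ℝ)) → ℝ → (Fin n → ℝ) :=
    fun ζ t => ∫ s in (0:ℝ)..t, f (E ζ s) (v s)
  have hP : ∀ ζ, Continuous (P ζ) := fun ζ => intervalIntegral.continuous_primitive (hii ζ) 0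
  let G : (BoundedContinuousFunction ℝ (Fin n → ℝ)) → ℝ → (Fin n → ℝ) :=
    fun ζ t => Real.exp (-(L * max t 0)) • (x + P ζ (max t 0))
  have hG : ∀ ζ, Continuous (G ζ) := fun ζ => by
    have h1 : Continuous (fun t : ℝ => P ζ (max t 0)) :=
      (hP ζ).comp (continuous_id.max continuous_const)
    show Continuous (fun t : ℝ => Real.exp (-(L * max t 0)) • (x + P ζ (max t 0)))
    fun_prop
  have hone : ∀ t : ℝ, Real.exp (-(L * t)) * Real.exp (L * t) = 1 := fun t => by
    rw [← Real.exp_add]; simp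
  have hPb : ∀ ζ t, 0 ≤ t → ‖P ζ t‖ ≤ (C + K * ‖ζ‖) * (Real.exp (L * t) / L) := by
    intro ζ t ht
    have h1 : ‖P ζ t‖ ≤ ∫ s in (0:ℝ)..t, (C + K * ‖ζ‖) * Real.exp (L * s) := by
      apply intervalIntegral.norm_integral_le_of_norm_le ht
      · refine Eventually.of_forall fun s hs => (H.growth _ (hvU s)).trans ?_
        have h2 : ‖E ζ s‖ ≤ Real.exp (L * s) * ‖ζ‖ := by
          show ‖Real.exp (L * s) • ζ s‖ ≤ _
          rw [norm_smul, Real.norm_eq_abs, abs_of_pos (Real.exp_pos _)]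
          exact mul_le_mul_of_nonneg_left (ζ.norm_coe_le_norm s) (Real.exp_pos _).le
        have h3 : 1 ≤ Real.exp (L * s) := Real.one_le_exp (by have := hs.1; positivity)
        have h4 : K * ‖E ζ s‖ ≤ K * (Real.exp (L * s) * ‖ζ‖) := by gcongr
        nlinarith
      · exact (by fun_prop : Continuous _).intervalIntegrable _ _
    rw [intervalIntegral.integral_const_mul] at h1
    refine h1.trans ?_
    have := aux_exp_int (t := t) hLpos
    gcongr
  have hGb : ∀ ζ t, ‖G ζ t‖ ≤ ‖x‖ + (C + K * ‖ζ‖) / L := by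
    intro ζ t
    have ht : 0 ≤ max t 0 := le_max_right _ _
    show ‖Real.exp (-(L * max t 0)) • (x + P ζ (max t 0))‖ ≤ _
    generalize max t 0 = t at *
    rw [norm_smul, Real.norm_eq_abs, abs_of_pos (Real.exp_pos _)]
    have h1 := hPb ζ t ht
    have h2 : ‖x + P ζ t‖ ≤ ‖x‖ + (C + K * ‖ζ‖) * (Real.exp (L * t) / L) :=
      (norm_add_le _ _).trans (by linarith)
    have h3 : Real.exp (-(L * t)) ≤ 1 := Real.exp_le_one_iff.2 (by nlinarith)
    have h4 := Real.exp_pos (-(L * t))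
    calc Real.exp (-(L * t)) * ‖x + P ζ t‖
        ≤ Real.exp (-(L * t)) * (‖x‖ + (C + K * ‖ζ‖) * (Real.exp (L * t) / L)) := by gcongr
      _ = Real.exp (-(L * t)) * ‖x‖ + (C + K * ‖ζ‖) / L * (Real.exp (-(L * t)) * Real.exp (L * t)) := by
        ring
      _ ≤ ‖x‖ + (C + K * ‖ζ‖) / L := by
        rw [hone, mul_one]
        have := mul_le_mul_of_nonneg_right h3 (norm_nonneg x)
        linarith
  let Γ : (BoundedContinuousFunction ℝ (Fin n → ℝ)) → (BoundedContinuousFunction ℝ (Fin n → ℝ)) :=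
    fun ζ => BoundedContinuousFunction.ofNormedAddCommGroup (G ζ) (hG ζ) _ (hGb ζ)
  have hlip : ContractingWith (1/2) Γ := by
    refine ⟨by rw [← NNReal.coe_lt_coe]; norm_num, LipschitzWith.of_dist_le_mul fun ζ ζ' => ?_⟩
    refine (BoundedContinuousFunction.dist_le (by positivity)).2 fun t => ?_
    have ht : 0 ≤ max t 0 := le_max_right _ _
    show dist (Real.exp (-(L * max t 0)) • (x + P ζ (max t 0)))
      (Real.exp (-(L * max t 0)) • (x + P ζ' (max t 0))) ≤ _
    generalize max t 0 = t at *
    rw [dist_eq_norm, ← smul_sub, add_sub_add_left_eq_sub, norm_smul, Real.norm_eq_abs,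
      abs_of_pos (Real.exp_pos _)]
    have h0 : P ζ t - P ζ' t = ∫ s in (0:ℝ)..t, (f (E ζ s) (v s) - f (E ζ' s) (v s)) :=
      (intervalIntegral.integral_sub (hii _ _ _) (hii _ _ _)).symm
    have h1 : ‖P ζ t - P ζ' t‖ ≤ ∫ s in (0:ℝ)..t, (K * dist ζ ζ') * Real.exp (L * s) := by
      rw [h0]
      apply intervalIntegral.norm_integral_le_of_norm_le ht
      · refine Eventually.of_forall fun s hs => (H.lip _ _ _ (hvU s)).trans ?_
        have h2 : ‖E ζ s - E ζ' s‖ ≤ Real.exp (L * s) * dist ζ ζ' := by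
          show ‖Real.exp (L * s) • ζ s - Real.exp (L * s) • ζ' s‖ ≤ _
          rw [← smul_sub, norm_smul, Real.norm_eq_abs, abs_of_pos (Real.exp_pos _), ← dist_eq_norm]
          exact mul_le_mul_of_nonneg_left (BoundedContinuousFunction.dist_coe_le_dist s)
            (Real.exp_pos _).le
        calc K * ‖E ζ s - E ζ' s‖ ≤ K * (Real.exp (L * s) * dist ζ ζ') := by gcongr
          _ = _ := by ring
      · exact (by fun_prop : Continuous _).intervalIntegrable _ _
    rw [intervalIntegral.integral_const_mul] at h1
    have h5 := aux_exp_int (t := t) hLpos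
    calc Real.exp (-(L * t)) * ‖P ζ t - P ζ' t‖
        ≤ Real.exp (-(L * t)) * (K * dist ζ ζ' * (Real.exp (L * t) / L)) := by
          gcongr
          exact h1.trans (by gcongr)
      _ = (K / L) * dist ζ ζ' * (Real.exp (-(L * t)) * Real.exp (L * t)) := by ring
      _ = (K / L) * dist ζ ζ' := by rw [hone, mul_one]
      _ ≤ ((1/2 : NNReal) : ℝ) * dist ζ ζ' := by
        gcongr
        push_cast
        rw [div_le_div_iff₀ hLpos (by norm_num)]
        linarith
  obtain ⟨ζ, hζ, -⟩ := hlip.exists_fixedPoint 0 (edist_ne_top _ _)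
  refine ⟨E ζ, hE ζ, fun t ht => ?_⟩
  have h1 : ζ t = G ζ t := by
    conv_lhs => rw [← hζ]
    rfl
  have h2 : E ζ t = x + P ζ t := by
    show Real.exp (L * t) • ζ t = _
    rw [h1]
    show Real.exp (L * t) • (Real.exp (-(L * max t 0)) • (x + P ζ (max t 0))) = _
    rw [max_eq_left ht, smul_smul, mul_comm, hone, one_smul]
  rw [h2]
  congr 1
  apply intervalIntegral.integral_congr_ae
  refine Eventually.of_forall fun r hr => ?_
  rw [uIoc_of_le ht] at hr
  simp [hv, hr.1.le]

end traj

/-- Payoff of a trajectory for the time dependent obstacle `ψ`. -/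
def JJ {n : ℕ} (ψ : (Fin n → ℝ) × ℝ → ℝ) (ξ : ℝ → Fin n → ℝ) (T : ℝ) : ℝ :=
  sInf ((fun t => ψ (ξ t, T - t)) '' Set.Icc 0 T)

/-- Value function for the obstacle `ψ`. -/
def WW {n m : ℕ} (f : (Fin n → ℝ) → (Fin m → ℝ) → Fin n → ℝ)
    (U : Set (Fin m → ℝ)) (ψ : (Fin n → ℝ) × ℝ → ℝ) (x : Fin n → ℝ) (T : ℝ) : ℝ :=
  sSup {y : ℝ | ∃ u ξ, IsControl U u ∧ IsTrajectory f x u ξ ∧ y = JJ ψ ξ T}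

section value
variable {n m : ℕ} {f : (Fin n → ℝ) → (Fin m → ℝ) → Fin n → ℝ}
    {U : Set (Fin m → ℝ)} {K C : ℝ} {ψ : (Fin n → ℝ) × ℝ → ℝ}

theorem JJ_le (hψ0 : ∀ p : (Fin n → ℝ) × ℝ, 0 ≤ p.2 → 0 ≤ ψ p) {ξ : ℝ → Fin n → ℝ} {T t : ℝ}
    (ht : t ∈ Icc 0 T) : JJ ψ ξ T ≤ ψ (ξ t, T - t) := by
  apply csInf_le
  · refine ⟨0, ?_⟩
    rintro y ⟨s, hs, rfl⟩
    exact hψ0 _ (sub_nonneg.2 hs.2)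
  · exact ⟨t, ht, rfl⟩

theorem le_JJ {ξ : ℝ → Fin n → ℝ} {T c : ℝ} (hT : 0 ≤ T)
    (h : ∀ t ∈ Icc 0 T, c ≤ ψ (ξ t, T - t)) : c ≤ JJ ψ ξ T := by
  apply le_csInf
  · exact ⟨_, 0, left_mem_Icc.2 hT, rfl⟩
  · rintro y ⟨s, hs, rfl⟩
    exact h s hs

theorem JJ_le_WW (hψ0 : ∀ p : (Fin n → ℝ) × ℝ, 0 ≤ p.2 → 0 ≤ ψ p) {u : ℝ → Fin m → ℝ}
    {ξ : ℝ → Fin n → ℝ} {T : ℝ} (hT : 0 ≤ T) {x : Fin n → ℝ}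
    (hu : IsControl U u) (h : IsTrajectory f x u ξ) : JJ ψ ξ T ≤ WW f U ψ x T := by
  apply le_csSup
  · refine ⟨ψ (x, T), ?_⟩
    rintro y ⟨u, ξ, hu, h, rfl⟩
    have := JJ_le hψ0 (ξ := ξ) (left_mem_Icc.2 hT)
    rwa [FHyp.traj_zero h, sub_zero] at this
  · exact ⟨u, ξ, hu, h, rfl⟩

theorem FHyp.const_control (u : Fin m → ℝ) (hu : u ∈ U) : IsControl U (fun _ => u) :=
  ⟨measurable_const, fun _ _ => hu⟩

theorem FHyp.WW_ne (H : FHyp f U K C) (x : Fin n → ℝ) (T : ℝ) :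
    {y : ℝ | ∃ u ξ, IsControl U u ∧ IsTrajectory f x u ξ ∧ y = JJ ψ ξ T}.Nonempty := by
  obtain ⟨u, hu⟩ := H.ne
  obtain ⟨ξ, hξ⟩ := H.traj_exists (FHyp.const_control u hu) x
  exact ⟨_, _, ξ, FHyp.const_control u hu, hξ, rfl⟩

theorem FHyp.WW_le (H : FHyp f U K C) {x : Fin n → ℝ} {T c : ℝ}
    (h : ∀ u ξ, IsControl U u → IsTrajectory f x u ξ → JJ ψ ξ T ≤ c) : WW f U ψ x T ≤ c := by
  apply csSup_le (H.WW_ne x T)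
  rintro y ⟨u, ξ, hu, hξ, rfl⟩
  exact h u ξ hu hξ

theorem FHyp.exists_lt (H : FHyp f U K C) {x : Fin n → ℝ} {T c : ℝ}
    (h : c < WW f U ψ x T) : ∃ u ξ, IsControl U u ∧ IsTrajectory f x u ξ ∧ c < JJ ψ ξ T := by
  obtain ⟨y, ⟨u, ξ, hu, hξ, rfl⟩, hy⟩ := exists_lt_of_lt_csSup (H.WW_ne x T) h
  exact ⟨u, ξ, hu, hξ, hy⟩

theorem FHyp.WW_le_psi (H : FHyp f U K C) (hψ0 : ∀ p : (Fin n → ℝ) × ℝ, 0 ≤ p.2 → 0 ≤ ψ p)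
    {x : Fin n → ℝ} {T : ℝ} (hT : 0 ≤ T) : WW f U ψ x T ≤ ψ (x, T) := by
  refine H.WW_le fun u ξ hu h => ?_
  have := JJ_le hψ0 (ξ := ξ) (left_mem_Icc.2 hT)
  rwa [FHyp.traj_zero h, sub_zero] at this

theorem FHyp.WW_zero (H : FHyp f U K C) (hψ0 : ∀ p : (Fin n → ℝ) × ℝ, 0 ≤ p.2 → 0 ≤ ψ p)
    (x : Fin n → ℝ) : WW f U ψ x 0 = ψ (x, 0) := by
  refine le_antisymm (H.WW_le_psi hψ0 le_rfl) ?_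
  obtain ⟨u, hu⟩ := H.ne
  obtain ⟨ξ, hξ⟩ := H.traj_exists (FHyp.const_control u hu) x
  refine le_trans ?_ (JJ_le_WW hψ0 le_rfl (FHyp.const_control u hu) hξ)
  refine le_JJ le_rfl fun t ht => ?_
  have : t = 0 := le_antisymm ht.2 ht.1
  subst this
  rw [FHyp.traj_zero hξ, sub_zero]

theorem FHyp.dpp_sub (H : FHyp f U K C) (hψ0 : ∀ p : (Fin n → ℝ) × ℝ, 0 ≤ p.2 → 0 ≤ ψ p)
    {x : Fin n → ℝ} {T h : ℝ} (hh : 0 ≤ h) (hhT : h ≤ T) {u : ℝ → Fin m → ℝ}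
    {ξ : ℝ → Fin n → ℝ} (hu : IsControl U u) (hξ : IsTrajectory f x u ξ) :
    JJ ψ ξ T ≤ WW f U ψ (ξ h) (T - h) := by
  obtain ⟨h1, h2⟩ := H.traj_shift hu hξ hh
  refine le_trans ?_ (JJ_le_WW hψ0 (sub_nonneg.2 hhT) h1 h2)
  refine le_JJ (sub_nonneg.2 hhT) fun t ht => ?_
  have := JJ_le hψ0 (ξ := ξ) (T := T) (t := t + h) ⟨by linarith [ht.1], by linarith [ht.2]⟩
  rwa [show T - (t + h) = T - h - t by ring] at this

theorem FHyp.dpp_sup (H : FHyp f U K C) (hψ0 : ∀ p : (Fin n → ℝ) × ℝ, 0 ≤ p.2 → 0 ≤ ψ p)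
    {x : Fin n → ℝ} {T h c : ℝ} (hh : 0 ≤ h) (hhT : h ≤ T) {u : ℝ → Fin m → ℝ}
    {ξ : ℝ → Fin n → ℝ} (hu : IsControl U u) (hξ : IsTrajectory f x u ξ)
    (hc : ∀ t ∈ Icc 0 h, c ≤ ψ (ξ t, T - t)) (hc' : c < WW f U ψ (ξ h) (T - h)) :
    c ≤ WW f U ψ x T := by
  obtain ⟨u', ξ', hu', hξ', hlt⟩ := H.exists_lt hc'
  obtain ⟨h1, h2⟩ := H.traj_concat hu hu' hh hξ hξ'
  refine le_trans ?_ (JJ_le_WW hψ0 (hh.trans hhT) h1 h2)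
  refine le_JJ (hh.trans hhT) fun t ht => ?_
  by_cases hth : t ≤ h
  · simp only [hth, if_true]
    exact hc t ⟨ht.1, hth⟩
  · simp only [hth, if_false]
    have := JJ_le hψ0 (ξ := ξ') (T := T - h) (t := t - h)
      ⟨by linarith [ht.1], by linarith [ht.2]⟩
    rw [show T - h - (t - h) = T - t by ring] at this
    linarith

theorem FHyp.WW_lower (H : FHyp f U K C) (hψ0 : ∀ p : (Fin n → ℝ) × ℝ, 0 ≤ p.2 → 0 ≤ ψ p)
    (hψc : ContinuousOn ψ {p : (Fin n → ℝ) × ℝ | 0 ≤ p.2}) {R T₁ ε : ℝ} (hR : 0 ≤ R)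
    (hT₁ : 0 ≤ T₁) (hε : 0 < ε) :
    ∃ δ > 0, ∀ x x' : Fin n → ℝ, ∀ T T' : ℝ, ‖x‖ ≤ R → ‖x'‖ ≤ R → T ∈ Icc 0 T₁ → T' ∈ Icc 0 T₁ →
      ‖x - x'‖ < δ → |T - T'| < δ → WW f U ψ x T - ε ≤ WW f U ψ x' T' := by
  have hK0 := H.K0
  have hC0 := H.C0
  set B : ℝ := (R + C * T₁) * Real.exp (K * T₁) with hB
  have hB0 : 0 ≤ B := by positivity
  have hcomp : IsCompact (Metric.closedBall (0 : Fin n → ℝ) B ×ˢ Icc (0:ℝ) T₁) :=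
    (isCompact_closedBall _ _).prod isCompact_Icc
  have huc := hcomp.uniformContinuousOn_of_continuous
    (hψc.mono (fun p hp => hp.2.1))
  obtain ⟨δ₁, hδ₁, hd⟩ := Metric.uniformContinuousOn_iff.1 huc ε hε
  set M : ℝ := Real.exp (K * T₁) + (C + K * B) + 1 with hM
  have hMpos : 0 < M := by positivity
  refine ⟨δ₁ / M, by positivity, fun x x' T T' hx hx' hT hT' hxx hTT => ?_⟩
  rw [sub_le_iff_le_add]
  refine H.WW_le fun u ξ hu hξ => ?_
  obtain ⟨ξ', hξ'⟩ := H.traj_exists hu x'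
  rw [← sub_le_iff_le_add]
  refine le_trans ?_ (JJ_le_WW hψ0 hT'.1 hu hξ')
  refine le_JJ hT'.1 fun t' ht' => ?_
  have hbd : ∀ (y : Fin n → ℝ) (η : ℝ → Fin n → ℝ), ‖y‖ ≤ R → IsTrajectory f y u η →
      ∀ t ∈ Icc 0 T₁, ‖η t‖ ≤ B := fun y η hy hη t ht =>
    (H.traj_bound hu hη t ht).trans (by rw [hB]; gcongr)
  have ht'1 : t' ∈ Icc 0 T₁ := ⟨ht'.1, ht'.2.trans hT'.2⟩
  set t := min t' T with htdef
  have ht : t ∈ Icc 0 T := ⟨le_min ht'.1 hT.1, min_le_right _ _⟩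
  have ht1 : t ∈ Icc 0 T₁ := ⟨ht.1, ht.2.trans hT.2⟩
  have e1 : |(T' - t') - (T - t)| ≤ |T - T'| ∧ |t - t'| ≤ |T - T'| := by
    rcases le_total t' T with h | h
    · rw [htdef, min_eq_left h]
      constructor
      · rw [abs_sub_comm T T']; apply le_of_eq; congr 1; ring
      · simp
    · rw [htdef, min_eq_right h]
      have h2 := ht'.2
      rw [abs_of_nonneg (by linarith), abs_of_nonpos (by linarith), abs_of_nonpos (by linarith)]
      constructor <;> linarith
  have e2 := H.traj_dep hu hξ hξ' (T := T₁) t' ht'1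
  have e3 := H.traj_lip hu hξ (hbd x ξ hx hξ) t ht1 t' ht'1
  have e4 : ‖ξ' t' - ξ t‖ < δ₁ := by
    have : ‖ξ' t' - ξ t‖ ≤ ‖ξ t' - ξ' t'‖ + ‖ξ t' - ξ t‖ := by
      rw [norm_sub_rev (ξ t') (ξ' t')]
      simpa using norm_add_le (ξ' t' - ξ t') (ξ t' - ξ t)
    have h5 : ‖x - x'‖ * Real.exp (K * T₁) ≤ δ₁ / M * Real.exp (K * T₁) := by gcongr
    have h6 : (C + K * B) * |t' - t| ≤ (C + K * B) * (δ₁ / M) := by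
      gcongr
      rw [abs_sub_comm]
      exact e1.2.trans hTT.le
    have h7 : δ₁ / M * M = δ₁ := by field_simp
    have h8 : 0 < δ₁ / M := by positivity
    rw [hM, mul_add, mul_add, ← hM] at h7
    linarith
  have e5 : |(T' - t') - (T - t)| < δ₁ := by
    refine (e1.1.trans_lt hTT).trans_le ?_
    apply div_le_self hδ₁.le
    rw [hM]
    have := Real.exp_pos (K * T₁)
    have : 0 ≤ C + K * B := by positivity
    linarith
  have e6 := hd (ξ' t', T' - t') ⟨by simpa using hbd x' ξ' hx' hξ' t' ht'1,
      ⟨by linarith [ht'.2], by linarith [ht'.1, hT'.2]⟩⟩ (ξ t, T - t)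
      ⟨by simpa using hbd x ξ hx hξ t ht1,
      ⟨by linarith [ht.2], by linarith [ht.1, hT.2]⟩⟩ (by
        rw [Prod.dist_eq, dist_eq_norm, Real.dist_eq]
        exact max_lt e4 e5)
  rw [Real.dist_eq] at e6
  have e7 := JJ_le hψ0 (ξ := ξ) ht
  linarith [(abs_lt.1 e6).1]

theorem FHyp.WW_cont (H : FHyp f U K C) (hψ0 : ∀ p : (Fin n → ℝ) × ℝ, 0 ≤ p.2 → 0 ≤ ψ p)
    (hψc : ContinuousOn ψ {p : (Fin n → ℝ) × ℝ | 0 ≤ p.2}) :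
    ContinuousOn (fun p : (Fin n → ℝ) × ℝ => WW f U ψ p.1 p.2)
      {p : (Fin n → ℝ) × ℝ | 0 ≤ p.2} := by
  rw [Metric.continuousOn_iff]
  rintro ⟨x, T⟩ hT ε hε
  have hT : 0 ≤ T := hT
  obtain ⟨δ, hδ, h⟩ := H.WW_lower hψ0 hψc (R := ‖x‖ + 1) (T₁ := T + 1) (by positivity)
    (by positivity) (half_pos hε)
  refine ⟨min δ 1, by positivity, ?_⟩
  rintro ⟨x', T'⟩ hT' hdist
  have hT' : 0 ≤ T' := hT'
  rw [Prod.dist_eq, max_lt_iff, dist_eq_norm, Real.dist_eq] at hdist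
  obtain ⟨h1, h2⟩ := hdist
  dsimp only at h1 h2
  have h3 := h1.trans_le (min_le_left _ _)
  have h4 := h2.trans_le (min_le_left _ _)
  have h5 := h1.trans_le (min_le_right _ _)
  have h6 := h2.trans_le (min_le_right _ _)
  have hx' : ‖x'‖ ≤ ‖x‖ + 1 := by
    have : ‖x'‖ ≤ ‖x' - x‖ + ‖x‖ := by simpa using norm_add_le (x' - x) x
    linarith
  have m1 : T ∈ Icc 0 (T + 1) := ⟨hT, by linarith⟩
  have m2 : T' ∈ Icc 0 (T + 1) := ⟨hT', by linarith [(abs_lt.1 h6).2]⟩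
  have a1 := h x x' T T' (by linarith) hx' m1 m2 (by rwa [norm_sub_rev]) (by rwa [abs_sub_comm])
  have a2 := h x' x T' T hx' (by linarith) m2 m1 h3 h4
  rw [Real.dist_eq, abs_lt]
  constructor <;> linarith

theorem FHyp.traj_lin (H : FHyp f U K C) {u : ℝ → Fin m → ℝ} (hu : IsControl U u)
    {ξ : ℝ → Fin n → ℝ} {x : Fin n → ℝ} (h : IsTrajectory f x u ξ) {T M a : ℝ} (hT : 0 ≤ T)
    (hM0 : 0 ≤ M) (hM : ∀ t ∈ Icc 0 T, ‖ξ t - x‖ ≤ M * t) (ℓ : (Fin n → ℝ) →L[ℝ] ℝ)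
    (ha : ∀ t ∈ Icc 0 T, ℓ (f x (u t)) ≤ a) :
    ℓ (ξ T - x) ≤ T * (a + ‖ℓ‖ * K * M * T) := by
  have hK0 := H.K0
  have e : ξ T - x = ∫ s in (0:ℝ)..T, f (ξ s) (u s) := by
    rw [h.2 T hT]; abel
  have hii := H.ii hu h.1 le_rfl hT
  rw [e, ← ContinuousLinearMap.intervalIntegral_comp_comm ℓ hii]
  have hle : ∫ s in (0:ℝ)..T, ℓ (f (ξ s) (u s)) ≤ ∫ s in (0:ℝ)..T, (a + ‖ℓ‖ * K * M * T) := by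
    apply intervalIntegral.integral_mono_on hT
    · exact ⟨ℓ.integrable_comp hii.1, ℓ.integrable_comp hii.2⟩
    · simp
    · intro s hs
      have h1 := ha s hs
      have h2 : ℓ (f (ξ s) (u s)) - ℓ (f x (u s)) ≤ ‖ℓ‖ * K * M * T := by
        rw [← map_sub]
        calc ℓ (f (ξ s) (u s) - f x (u s)) ≤ ‖ℓ (f (ξ s) (u s) - f x (u s))‖ := Real.le_norm_self _
          _ ≤ ‖ℓ‖ * ‖f (ξ s) (u s) - f x (u s)‖ := ℓ.le_opNorm _
          _ ≤ ‖ℓ‖ * (K * (M * T)) := by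
            gcongr
            refine (H.lip _ _ _ (hu.2 s hs.1)).trans ?_
            gcongr
            refine (hM s hs).trans ?_
            have := hs.2
            gcongr
          _ = _ := by ring
      linarith
  refine hle.trans (le_of_eq ?_)
  rw [intervalIntegral.integral_const, sub_zero, smul_eq_mul]

/-- linear speed of all trajectories from `x` over `[0,T]`. -/
theorem FHyp.traj_speed (H : FHyp f U K C) (x : Fin n → ℝ) {T : ℝ} (hT : 0 ≤ T) :
    ∃ M, 0 ≤ M ∧ ∀ (u : ℝ → Fin m → ℝ) (ξ : ℝ → Fin n → ℝ), IsControl U u →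
      IsTrajectory f x u ξ → ∀ t ∈ Icc 0 T, ‖ξ t - x‖ ≤ M * t := by
  have hK0 := H.K0
  have hC0 := H.C0
  refine ⟨C + K * ((‖x‖ + C * T) * Real.exp (K * T)), by positivity, ?_⟩
  intro u ξ hu hξ t ht
  have := H.traj_lip hu hξ (H.traj_bound hu hξ) 0 (left_mem_Icc.2 hT) t ht
  rwa [FHyp.traj_zero hξ, sub_zero, abs_of_nonneg ht.1] at this

theorem clm_split (D : ((Fin n → ℝ) × ℝ) →L[ℝ] ℝ) (y : Fin n → ℝ) (s : ℝ) :
    D (y, s) = D (y, 0) + s * D (0, 1) := by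
  have : ((y, s) : (Fin n → ℝ) × ℝ) = (y, 0) + s • ((0, 1) : (Fin n → ℝ) × ℝ) := by
    ext <;> simp
  rw [this, map_add, map_smul, smul_eq_mul]

/-- Uniform first order expansion along trajectories. -/
theorem FHyp.expansion {x : Fin n → ℝ} {T M θ : ℝ} (hM0 : 0 ≤ M) (hθ : 0 < θ)
    {φ : (Fin n → ℝ) × ℝ → ℝ} {D : ((Fin n → ℝ) × ℝ) →L[ℝ] ℝ} (hD : HasFDerivAt φ D (x, T))
    {S : Set ((Fin n → ℝ) × ℝ)} (hS : S ∈ 𝓝 (x, T)) :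
    ∃ h₀ > 0, ∀ h, 0 ≤ h → h ≤ h₀ → ∀ y : Fin n → ℝ, ‖y - x‖ ≤ M * h → (y, T - h) ∈ S ∧
      |φ (y, T - h) - φ (x, T) - (D (y - x, 0) - h * D (0, 1))| ≤ θ * h := by
  have hlo := hD.isLittleO
  rw [Asymptotics.isLittleO_iff] at hlo
  have hc : 0 < θ / (M + 1) := by positivity
  obtain ⟨r, hr, hball⟩ := Metric.mem_nhds_iff.1 (Filter.inter_mem (hlo hc) hS)
  refine ⟨r / (2 * (M + 1)), by positivity, fun h hh hh0 y hy => ?_⟩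
  have hn : ‖((y, T - h) : (Fin n → ℝ) × ℝ) - (x, T)‖ ≤ (M + 1) * h := by
    rw [Prod.mk_sub_mk, Prod.norm_def]
    apply max_le
    · simp only; nlinarith
    · simp only [sub_sub_cancel_left, norm_neg, Real.norm_eq_abs, abs_of_nonneg hh]
      nlinarith
  have hmem : ((y, T - h) : (Fin n → ℝ) × ℝ) ∈ Metric.ball (x, T) r := by
    rw [Metric.mem_ball, dist_eq_norm]
    refine hn.trans_lt ?_
    have : (M + 1) * h ≤ (M + 1) * (r / (2 * (M + 1))) := by gcongr
    have h2 : (M + 1) * (r / (2 * (M + 1))) = r / 2 := by field_simp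
    linarith
  obtain ⟨h1, h2⟩ := hball hmem
  refine ⟨h2, ?_⟩
  have h1 : ‖φ (y, T - h) - φ (x, T) - D ((y, T - h) - (x, T))‖ ≤
    θ / (M + 1) * ‖((y, T - h) : (Fin n → ℝ) × ℝ) - (x, T)‖ := h1
  rw [Prod.mk_sub_mk, clm_split, sub_sub_cancel_left, Real.norm_eq_abs] at h1
  rw [Prod.mk_sub_mk, sub_sub_cancel_left] at hn
  rw [show D (y - x, 0) - h * D (0, 1) = D (y - x, 0) + -h * D (0, 1) by ring]
  refine h1.trans ?_
  calc _ ≤ θ / (M + 1) * ((M + 1) * h) := by gcongr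
    _ = θ * h := by field_simp

theorem FHyp.bddAbove (H : FHyp f U K C) (x : Fin n → ℝ) (D : ((Fin n → ℝ) × ℝ) →L[ℝ] ℝ) :
    BddAbove ((fun u => D (f x u, 0)) '' U) := by
  refine ⟨‖D‖ * (C + K * ‖x‖), ?_⟩
  rintro _ ⟨u, hu, rfl⟩
  refine (Real.le_norm_self _).trans ((D.le_opNorm _).trans ?_)
  gcongr
  rw [Prod.norm_def]
  simpa using H.growth x hu

theorem norm_inl_comp_le (D : ((Fin n → ℝ) × ℝ) →L[ℝ] ℝ) :
    ‖D.comp (ContinuousLinearMap.inl ℝ (Fin n → ℝ) ℝ)‖ ≤ ‖D‖ := by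
  refine ContinuousLinearMap.opNorm_le_bound _ (norm_nonneg _) fun y => ?_
  refine (D.le_opNorm _).trans ?_
  gcongr
  simp [Prod.norm_def]

theorem FHyp.visc_sub (H : FHyp f U K C) (hψ0 : ∀ p : (Fin n → ℝ) × ℝ, 0 ≤ p.2 → 0 ≤ ψ p)
    {x : Fin n → ℝ} {T : ℝ} (hT : 0 < T)
    {φ : (Fin n → ℝ) × ℝ → ℝ} {D : ((Fin n → ℝ) × ℝ) →L[ℝ] ℝ} (hD : HasFDerivAt φ D (x, T))
    (hmax : IsLocalMax (fun q : (Fin n → ℝ) × ℝ => WW f U ψ q.1 q.2 - φ q) (x, T)) :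
    D (0, 1) ≤ sSup ((fun u => D (f x u, 0)) '' U) := by
  by_contra hcon
  push Not at hcon
  set Hs := sSup ((fun u => D (f x u, 0)) '' U) with hHs
  set θ := D (0, 1) - Hs with hθ
  have hθ0 : 0 < θ := sub_pos.2 hcon
  obtain ⟨M, hM0, hM⟩ := H.traj_speed x hT.le
  have hK0 := H.K0
  obtain ⟨h₀, hh₀, hexp⟩ := FHyp.expansion hM0 (show 0 < θ / 4 by positivity) hD hmax
  set ℓ := D.comp (ContinuousLinearMap.inl ℝ (Fin n → ℝ) ℝ) with hℓ
  set A := ‖ℓ‖ * K * M with hA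
  have hA0 : 0 ≤ A := by positivity
  set h := min (min h₀ T) (θ / (4 * (A + 1))) with hh
  have hpos : 0 < h := by positivity
  have hle0 : h ≤ h₀ := (min_le_left _ _).trans (min_le_left _ _)
  have hleT : h ≤ T := (min_le_left _ _).trans (min_le_right _ _)
  have hAh : A * h ≤ θ / 4 := by
    have h1 : h ≤ θ / (4 * (A + 1)) := min_le_right _ _
    calc A * h ≤ (A + 1) * (θ / (4 * (A + 1))) := by
          gcongr
          linarith
      _ = θ / 4 := by field_simp
  obtain ⟨u, ξ, hu, hξ, hlt⟩ := H.exists_lt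
    (show WW f U ψ x T - θ / 4 * h < WW f U ψ x T by
      have : 0 < θ / 4 * h := by positivity
      linarith)
  have h1 := H.dpp_sub hψ0 hpos.le hleT hu hξ
  have hMh := hM u ξ hu hξ
  obtain ⟨h2, h3⟩ := hexp h hpos.le hle0 (ξ h) (hMh h ⟨hpos.le, hleT⟩)
  have h2 : WW f U ψ (ξ h) (T - h) - φ (ξ h, T - h) ≤ WW f U ψ x T - φ (x, T) := h2
  have h4 := H.traj_lin hu hξ hpos.le hM0 (fun t ht => hMh t ⟨ht.1, ht.2.trans hleT⟩) ℓ (a := Hs)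
    (fun t ht => le_csSup (H.bddAbove x D) ⟨u t, hu.2 t ht.1, rfl⟩)
  have h5 : D (ξ h - x, 0) ≤ h * (Hs + A * h) := h4
  have h6 := (abs_le.1 h3).2
  have h7 : h * (A * h) ≤ h * (θ / 4) := by gcongr
  have h8 : h * D (0, 1) = h * Hs + h * θ := by rw [hθ]; ring
  have h9 : 0 < h * θ := by positivity
  nlinarith

theorem FHyp.visc_super (H : FHyp f U K C) (hψ0 : ∀ p : (Fin n → ℝ) × ℝ, 0 ≤ p.2 → 0 ≤ ψ p)
    (hψc : ContinuousOn ψ {p : (Fin n → ℝ) × ℝ | 0 ≤ p.2})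
    {x : Fin n → ℝ} {T : ℝ} (hT : 0 < T)
    {φ : (Fin n → ℝ) × ℝ → ℝ} {D : ((Fin n → ℝ) × ℝ) →L[ℝ] ℝ} (hD : HasFDerivAt φ D (x, T))
    (hmin : IsLocalMin (fun q : (Fin n → ℝ) × ℝ => WW f U ψ q.1 q.2 - φ q) (x, T))
    (hlt : WW f U ψ x T < ψ (x, T)) :
    sSup ((fun u => D (f x u, 0)) '' U) ≤ D (0, 1) := by
  apply csSup_le (H.ne.image _)
  rintro _ ⟨v, hv, rfl⟩
  by_contra hcon
  simp only [not_le] at hcon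
  set θ := D (f x v, 0) - D (0, 1) with hθ
  have hθ0 : 0 < θ := sub_pos.2 hcon
  obtain ⟨M, hM0, hM⟩ := H.traj_speed x hT.le
  have hK0 := H.K0
  obtain ⟨c, hc1, hc2⟩ := exists_between hlt
  have hS : {q : (Fin n → ℝ) × ℝ | c < ψ q} ∈ 𝓝 (x, T) := by
    have hca : ContinuousAt ψ (x, T) := by
      apply hψc.continuousAt
      have : {p : (Fin n → ℝ) × ℝ | 0 < p.2} ∈ 𝓝 (x, T) :=
        (isOpen_lt continuous_const continuous_snd).mem_nhds hT
      exact Filter.mem_of_superset this fun p (hp : 0 < p.2) => hp.le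
    exact hca.eventually_const_lt hc2
  obtain ⟨h₀, hh₀, hexp⟩ := FHyp.expansion hM0 (show 0 < θ / 4 by positivity) hD
    (Filter.inter_mem hmin hS)
  set ℓ := D.comp (ContinuousLinearMap.inl ℝ (Fin n → ℝ) ℝ) with hℓ
  set A := ‖-ℓ‖ * K * M with hA
  have hA0 : 0 ≤ A := by positivity
  set h := min (min h₀ T) (θ / (4 * (A + 1))) with hh
  have hpos : 0 < h := by positivity
  have hle0 : h ≤ h₀ := (min_le_left _ _).trans (min_le_left _ _)
  have hleT : h ≤ T := (min_le_left _ _).trans (min_le_right _ _)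
  have hAh : A * h ≤ θ / 4 := by
    have h1 : h ≤ θ / (4 * (A + 1)) := min_le_right _ _
    calc A * h ≤ (A + 1) * (θ / (4 * (A + 1))) := by
          gcongr
          linarith
      _ = θ / 4 := by field_simp
  have hu := FHyp.const_control v hv
  obtain ⟨ξ, hξ⟩ := H.traj_exists hu x
  have hMh := hM _ ξ hu hξ
  obtain ⟨⟨h2, -⟩, h3⟩ := hexp h hpos.le hle0 (ξ h) (hMh h ⟨hpos.le, hleT⟩)
  have h2 : WW f U ψ x T - φ (x, T) ≤ WW f U ψ (ξ h) (T - h) - φ (ξ h, T - h) := h2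
  have h4 := H.traj_lin hu hξ hpos.le hM0 (fun t ht => hMh t ⟨ht.1, ht.2.trans hleT⟩) (-ℓ)
    (a := - D (f x v, 0)) (fun t ht => le_rfl)
  have h5 : - D (ξ h - x, 0) ≤ h * (- D (f x v, 0) + A * h) := h4
  have h6 := (abs_le.1 h3).1
  have h7 : h * (A * h) ≤ h * (θ / 4) := by gcongr
  have h8 : h * D (f x v, 0) = h * D (0, 1) + h * θ := by rw [hθ]; ring
  have h9 : 0 < h * θ := by positivity
  have h10 : WW f U ψ x T < WW f U ψ (ξ h) (T - h) := by nlinarith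
  obtain ⟨c', hc1', hc2'⟩ := exists_between (lt_min hc1 h10)
  have := H.dpp_sup hψ0 hpos.le hleT hu hξ (c := c') (fun t ht => by
    have := (hexp t ht.1 (ht.2.trans hle0) (ξ t) (hMh t ⟨ht.1, ht.2.trans hleT⟩)).1.2
    exact (hc2'.trans_le (min_le_left _ _)).le.trans (le_of_lt this))
    (hc2'.trans_le (min_le_right _ _))
  linarith

end value

section compare
variable {n m : ℕ} {f : (Fin n → ℝ) → (Fin m → ℝ) → Fin n → ℝ}
    {U : Set (Fin m → ℝ)} {K C : ℝ}

/-- Sum of squares of all coordinates. -/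
def QQ (z : (Fin n → ℝ) × ℝ) : ℝ := (∑ i, (z.1 i) ^ 2) + z.2 ^ 2

/-- The localizing function. -/
def SS (c : ℝ) (z : (Fin n → ℝ) × ℝ) : ℝ := Real.exp (c * z.2) * (1 + ∑ i, (z.1 i) ^ 2)

theorem QQ_contDiff : ContDiff ℝ 1 (QQ (n := n)) := by
  unfold QQ; fun_prop

theorem SS_contDiff (c : ℝ) : ContDiff ℝ 1 (SS (n := n) c) := by
  unfold SS; fun_prop

theorem sumsq_hasFDerivAt (z : (Fin n → ℝ) × ℝ) :
    HasFDerivAt (fun z : (Fin n → ℝ) × ℝ => ∑ i, (z.1 i) ^ 2)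
      (∑ i, (2 * z.1 i) • ((ContinuousLinearMap.proj (R := ℝ) (φ := fun _ : Fin n => ℝ) i).comp
        (ContinuousLinearMap.fst ℝ (Fin n → ℝ) ℝ))) z := by
  apply HasFDerivAt.fun_sum
  intro i _
  have h := ((ContinuousLinearMap.proj (R := ℝ) (φ := fun _ : Fin n => ℝ) i).comp
        (ContinuousLinearMap.fst ℝ (Fin n → ℝ) ℝ)).hasFDerivAt (x := z)
  have h2 := h.pow 2
  simpa using h2

theorem QQ_fderiv (z v : (Fin n → ℝ) × ℝ) :
    fderiv ℝ QQ z v = (∑ i, 2 * z.1 i * v.1 i) + 2 * z.2 * v.2 := by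
  have h1 := sumsq_hasFDerivAt z
  have h2 : HasFDerivAt (fun z : (Fin n → ℝ) × ℝ => z.2 ^ 2)
      ((2 * z.2) • ContinuousLinearMap.snd ℝ (Fin n → ℝ) ℝ) z := by
    have h := (hasFDerivAt_snd (𝕜 := ℝ) (p := z)).pow 2
    simpa using h
  have h3 : HasFDerivAt QQ _ z := h1.add h2
  rw [h3.fderiv]
  simp

theorem SS_fderiv (c : ℝ) (z v : (Fin n → ℝ) × ℝ) :
    fderiv ℝ (SS c) z v = Real.exp (c * z.2) * (∑ i, 2 * z.1 i * v.1 i) + c * SS c z * v.2 := by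
  have h1 := (sumsq_hasFDerivAt z).const_add 1
  have h2 := ((hasFDerivAt_snd (𝕜 := ℝ) (p := z)).const_mul c).exp
  have h3 : HasFDerivAt (SS c) _ z := h2.mul h1
  rw [h3.fderiv]
  simp [SS]
  ring

theorem sum_mul_le (a b : Fin n → ℝ) :
    ∑ i, 2 * a i * b i ≤ 2 * n * ‖a‖ * ‖b‖ := by
  have : ∀ i ∈ Finset.univ, 2 * a i * b i ≤ 2 * ‖a‖ * ‖b‖ := by
    intro i _
    have h1 := norm_le_pi_norm a i
    have h2 := norm_le_pi_norm b i
    calc 2 * a i * b i ≤ ‖2 * a i * b i‖ := Real.le_norm_self _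
      _ = 2 * ‖a i‖ * ‖b i‖ := by simp
      _ ≤ _ := by gcongr
  refine (Finset.sum_le_sum this).trans (le_of_eq ?_)
  simp
  ring

theorem sq_norm_le_sumsq (a : Fin n → ℝ) : ‖a‖ ^ 2 ≤ ∑ i, a i ^ 2 := by
  have h : ‖a‖ ≤ Real.sqrt (∑ i, a i ^ 2) := by
    refine (pi_norm_le_iff_of_nonneg (Real.sqrt_nonneg _)).2 fun i => ?_
    rw [Real.norm_eq_abs]
    apply Real.abs_le_sqrt
    exact Finset.single_le_sum (f := fun i => a i ^ 2) (fun i _ => sq_nonneg _) (Finset.mem_univ i)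
  calc ‖a‖ ^ 2 ≤ Real.sqrt (∑ i, a i ^ 2) ^ 2 := by gcongr
    _ = _ := Real.sq_sqrt (Finset.sum_nonneg fun i _ => sq_nonneg _)

theorem sq_norm_le_QQ (z : (Fin n → ℝ) × ℝ) : ‖z‖ ^ 2 ≤ QQ z := by
  have h1 := sq_norm_le_sumsq z.1
  have h0 : 0 ≤ ∑ i, z.1 i ^ 2 := Finset.sum_nonneg fun i _ => sq_nonneg _
  unfold QQ
  rw [Prod.norm_def]
  rcases max_choice ‖z.1‖ ‖z.2‖ with h | h <;> rw [h]
  · nlinarith [sq_nonneg z.2]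
  · rw [Real.norm_eq_abs, sq_abs]; linarith

theorem SS_one_le {c : ℝ} (hc : 0 ≤ c) {z : (Fin n → ℝ) × ℝ} (hz : 0 ≤ z.2) : 1 ≤ SS c z := by
  have h0 : 0 ≤ ∑ i, z.1 i ^ 2 := Finset.sum_nonneg fun i _ => sq_nonneg _
  have h1 : 1 ≤ Real.exp (c * z.2) := Real.one_le_exp (by positivity)
  unfold SS
  nlinarith

theorem FHyp.SS_drift (H : FHyp f U K C) {c : ℝ} (hc : c = n * (C + 2 * K) + 1)
    (z : (Fin n → ℝ) × ℝ) {u : Fin m → ℝ} (hu : u ∈ U) :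
    fderiv ℝ (SS c) z (f z.1 u, 0) + SS c z ≤ fderiv ℝ (SS c) z (0, 1) := by
  rw [SS_fderiv, SS_fderiv]
  simp only [mul_zero, add_zero, Pi.zero_apply, Finset.sum_const_zero, zero_add, mul_one]
  have hK0 := H.K0
  have hC0 := H.C0
  have h1 := sum_mul_le z.1 (f z.1 u)
  have h2 := H.growth z.1 hu
  have h3 := sq_norm_le_sumsq z.1
  have h4 : 2 * n * ‖z.1‖ * ‖f z.1 u‖ ≤ n * (C + 2 * K) * (1 + ∑ i, z.1 i ^ 2) := by
    calc 2 * n * ‖z.1‖ * ‖f z.1 u‖ ≤ 2 * n * ‖z.1‖ * (C + K * ‖z.1‖) := by gcongr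
      _ = n * (C * (2 * ‖z.1‖) + 2 * K * ‖z.1‖ ^ 2) := by ring
      _ ≤ n * (C * (1 + ‖z.1‖ ^ 2) + 2 * K * (1 + ‖z.1‖ ^ 2)) := by
        gcongr
        · nlinarith [sq_nonneg (‖z.1‖ - 1)]
        · linarith
      _ = n * (C + 2 * K) * (1 + ‖z.1‖ ^ 2) := by ring
      _ ≤ _ := by gcongr
  have h5 := Real.exp_pos (c * z.2)
  have h6 : Real.exp (c * z.2) * (∑ i, 2 * z.1 i * f z.1 u i) ≤
      Real.exp (c * z.2) * (n * (C + 2 * K) * (1 + ∑ i, z.1 i ^ 2)) := by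
    gcongr
    exact h1.trans h4
  have h7 : c * SS c z = Real.exp (c * z.2) * (n * (C + 2 * K) * (1 + ∑ i, z.1 i ^ 2)) + SS c z := by
    unfold SS
    conv_lhs => rw [show ∀ a, c * a = n * (C + 2 * K) * a + a from fun a => by rw [hc]; ring]
    ring
  linarith

theorem SS_compact {c : ℝ} (hc : 1 ≤ c) (R : ℝ) :
    IsCompact {z : (Fin n → ℝ) × ℝ | 0 ≤ z.2 ∧ SS c z ≤ R} := by
  have hcl : IsClosed {z : (Fin n → ℝ) × ℝ | 0 ≤ z.2 ∧ SS c z ≤ R} :=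
    (isClosed_le continuous_const continuous_snd).inter
      (isClosed_le (SS_contDiff c).continuous continuous_const)
  refine IsCompact.of_isClosed_subset
    ((isCompact_closedBall (0 : Fin n → ℝ) R).prod (isCompact_Icc (a := (0:ℝ)) (b := R))) hcl ?_
  rintro z ⟨hz, hzR⟩
  have h0 : 0 ≤ ∑ i, z.1 i ^ 2 := Finset.sum_nonneg fun i _ => sq_nonneg _
  have h1 : 1 ≤ Real.exp (c * z.2) := Real.one_le_exp (by positivity)
  have h2 := sq_norm_le_sumsq z.1
  have h3 := Real.add_one_le_exp (c * z.2)
  unfold SS at hzR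
  refine ⟨?_, hz, ?_⟩
  · rw [mem_closedBall_zero_iff]
    nlinarith [sq_nonneg (‖z.1‖ - 1)]
  · nlinarith

theorem pow_fderiv {E : Type*} [NormedAddCommGroup E] [NormedSpace ℝ E] {s : E → ℝ} {z : E}
    (hs : DifferentiableAt ℝ s z) (κ : ℝ) (N : ℕ) (v : E) :
    fderiv ℝ (fun z => κ * s z ^ (N + 1)) z v = κ * (N + 1) * s z ^ N * fderiv ℝ s z v := by
  have h := (hs.hasFDerivAt.pow (N + 1)).const_mul κ
  rw [h.fderiv]
  simp
  ring

/-- The comparison principle. -/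
theorem FHyp.compare (H : FHyp f U K C) {ψ w₁ w₂ : (Fin n → ℝ) × ℝ → ℝ}
    (hψ : ContinuousOn ψ {p : (Fin n → ℝ) × ℝ | 0 ≤ p.2})
    (hw₁ : ContinuousOn w₁ {p : (Fin n → ℝ) × ℝ | 0 ≤ p.2})
    (hw₂ : ContinuousOn w₂ {p : (Fin n → ℝ) × ℝ | 0 ≤ p.2})
    (hinit : ∀ p : (Fin n → ℝ) × ℝ, p.2 = 0 → w₁ p ≤ w₂ p)
    (hsub : ∀ p : (Fin n → ℝ) × ℝ, 0 < p.2 → ∀ φ : (Fin n → ℝ) × ℝ → ℝ, ContDiff ℝ 1 φ →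
      IsLocalMax (fun q => w₁ q - φ q) p →
      fderiv ℝ φ p ((0, 1) : (Fin n → ℝ) × ℝ) ≤ sSup ((fun u => fderiv ℝ φ p (f p.1 u, 0)) '' U) ∧
        w₁ p ≤ ψ p)
    (hsup : ∀ p : (Fin n → ℝ) × ℝ, 0 < p.2 → ∀ φ : (Fin n → ℝ) × ℝ → ℝ, ContDiff ℝ 1 φ →
      IsLocalMin (fun q => w₂ q - φ q) p →
      sSup ((fun u => fderiv ℝ φ p (f p.1 u, 0)) '' U) ≤ fderiv ℝ φ p ((0, 1) : (Fin n → ℝ) × ℝ) ∨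
        ψ p ≤ w₂ p) :
    ∀ p : (Fin n → ℝ) × ℝ, 0 ≤ p.2 → w₁ p ≤ w₂ p := by
  intro p₀ hp₀
  by_contra hcon
  push Not at hcon
  have hK0 := H.K0
  have hC0 := H.C0
  set G := w₁ p₀ - w₂ p₀ with hG
  have hG0 : 0 < G := sub_pos.2 hcon
  obtain ⟨c, hc⟩ : ∃ c : ℝ, c = n * (C + 2 * K) + 1 := ⟨_, rfl⟩
  have hc1 : 1 ≤ c := by
    have : 0 ≤ (n : ℝ) * (C + 2 * K) := by positivity
    linarith
  have hs0 : 1 ≤ SS c p₀ := SS_one_le (by linarith) hp₀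
  set R := 2 * SS c p₀ with hR
  have hR0 : 0 < R := by linarith
  set S : Set ((Fin n → ℝ) × ℝ) := {z | 0 ≤ z.2 ∧ SS c z ≤ R} with hS
  have hScomp : IsCompact S := SS_compact hc1 R
  have hSsub : S ⊆ {p : (Fin n → ℝ) × ℝ | 0 ≤ p.2} := fun z hz => hz.1
  have hp₀S : p₀ ∈ S := ⟨hp₀, by linarith⟩
  have hw₁S := hw₁.mono hSsub
  have hw₂S := hw₂.mono hSsub
  have hψS := hψ.mono hSsub
  -- bound on the difference
  obtain ⟨M, hM⟩ := hScomp.bddAbove_image (hw₁S.sub hw₂S)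
  have hM : ∀ z ∈ S, w₁ z - w₂ z ≤ M := fun z hz => hM ⟨z, hz, rfl⟩
  have hM0 : 0 < M := hG0.trans_le (hM p₀ hp₀S)
  -- the penalty
  obtain ⟨N, hN⟩ := exists_pow_lt_of_lt_one (show 0 < G / (2 * M) by positivity)
    (show (1 / 2 : ℝ) < 1 by norm_num)
  set κ := M / R ^ (N + 1) with hκ
  have hκ0 : 0 < κ := by positivity
  set χ : (Fin n → ℝ) × ℝ → ℝ := fun z => κ * SS c z ^ (N + 1) with hχ
  have hχd : ContDiff ℝ 1 χ := contDiff_const.mul ((SS_contDiff c).pow _)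
  have hχp : χ p₀ < G / 2 := by
    have e : χ p₀ = M * (1 / 2) ^ (N + 1) := by
      show M / R ^ (N + 1) * SS c p₀ ^ (N + 1) = _
      rw [hR, mul_pow, one_div, inv_pow]
      have : SS c p₀ ≠ 0 := by linarith
      field_simp
    rw [e, pow_succ]
    have h1 : M * ((1 / 2) ^ N * (1 / 2)) < M * (G / (2 * M)) := by
      have h2 : (0:ℝ) < (1 / 2) ^ N := by positivity
      apply mul_lt_mul_of_pos_left _ hM0
      linarith
    have h2 : M * (G / (2 * M)) = G / 2 := by field_simp
    linarith
  have hχR : ∀ z, SS c z = R → χ z = M := by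
    intro z hz
    show M / R ^ (N + 1) * SS c z ^ (N + 1) = _
    rw [hz]
    field_simp
  have hχ0 : ∀ z ∈ S, 0 ≤ χ z := fun z hz => by
    have := SS_one_le (show 0 ≤ c by linarith) hz.1
    positivity
  set η := κ * (N + 1) with hη
  have hη0 : 0 < η := by positivity
  have hdrift : ∀ z ∈ S, ∀ u ∈ U, fderiv ℝ χ z (f z.1 u, 0) + η ≤ fderiv ℝ χ z (0, 1) := by
    intro z hz u hu
    have hd : DifferentiableAt ℝ (SS c) z := (SS_contDiff c).differentiable (by norm_num) z
    rw [hχ, pow_fderiv hd, pow_fderiv hd]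
    have h1 := H.SS_drift hc z hu
    have h2 := SS_one_le (show 0 ≤ c by linarith) hz.1
    have h3 : 1 ≤ SS c z ^ N := one_le_pow₀ h2
    have h4 : η * SS c z ^ N * (fderiv ℝ (SS c) z (f z.1 u, 0) + SS c z) ≤
      η * SS c z ^ N * fderiv ℝ (SS c) z (0, 1) := by gcongr
    have h5 : η * 1 ≤ η * (SS c z ^ N * SS c z) := by
      gcongr
      nlinarith
    rw [← hη]
    linarith
  -- tolerances
  set e := min (G / 16) (η / (8 * n * K + 8)) with he
  have he0 : 0 < e := by positivity
  have heG : e ≤ G / 16 := min_le_left _ _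
  have heη : 4 * n * K * e < η := by
    have h1 : e ≤ η / (8 * n * K + 8) := min_le_right _ _
    rw [le_div_iff₀ (by positivity)] at h1
    have h2 : 0 ≤ n * K * e := by positivity
    nlinarith
  have huc : ∀ F : (Fin n → ℝ) × ℝ → ℝ, ContinuousOn F S →
      ∃ δ > 0, ∀ a ∈ S, ∀ b ∈ S, dist a b < δ → |F a - F b| < e := by
    intro F hF
    obtain ⟨δ, hδ, h⟩ := Metric.uniformContinuousOn_iff.1
      (hScomp.uniformContinuousOn_of_continuous hF) e he0
    exact ⟨δ, hδ, fun a ha b hb hab => h a ha b hb hab⟩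
  obtain ⟨δ₁, hδ₁, u₁⟩ := huc w₁ hw₁S
  obtain ⟨δ₂, hδ₂, u₂⟩ := huc w₂ hw₂S
  obtain ⟨δ₃, hδ₃, u₃⟩ := huc ψ hψS
  obtain ⟨δ₄, hδ₄, u₄⟩ := huc χ hχd.continuous.continuousOn
  set δ := min (min δ₁ δ₂) (min δ₃ δ₄) with hδ
  have hδ0 : 0 < δ := by positivity
  obtain ⟨B, hB⟩ := hScomp.exists_bound_of_continuousOn (hw₁S.sub hχd.continuous.continuousOn)
  have hB : ∀ z ∈ S, |w₁ z - χ z| ≤ B := fun z hz => hB z hz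
  have hB0 : 0 ≤ B := (abs_nonneg _).trans (hB p₀ hp₀S)
  set k := (2 * B + 1) / δ ^ 2 with hk
  have hk0 : 0 < k := by positivity
  -- doubling
  obtain ⟨⟨z₁, z₂⟩, ⟨hz₁, hz₂⟩, hmax⟩ := (hScomp.prod hScomp).exists_isMaxOn ⟨(p₀, p₀), hp₀S, hp₀S⟩
    (f := fun q : ((Fin n → ℝ) × ℝ) × ((Fin n → ℝ) × ℝ) =>
      w₁ q.1 - w₂ q.2 - k * QQ (q.1 - q.2) - χ q.1) (by
      have a1 : ContinuousOn (fun q : ((Fin n → ℝ) × ℝ) × ((Fin n → ℝ) × ℝ) => w₁ q.1) (S ×ˢ S) :=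
        hw₁S.comp continuousOn_fst fun q hq => hq.1
      have a2 : ContinuousOn (fun q : ((Fin n → ℝ) × ℝ) × ((Fin n → ℝ) × ℝ) => w₂ q.2) (S ×ˢ S) :=
        hw₂S.comp continuousOn_snd fun q hq => hq.2
      have a3 : Continuous (fun q : ((Fin n → ℝ) × ℝ) × ((Fin n → ℝ) × ℝ) =>
          k * QQ (q.1 - q.2)) :=
        continuous_const.mul (QQ_contDiff.continuous.comp (continuous_fst.sub continuous_snd))
      have a4 : Continuous (fun q : ((Fin n → ℝ) × ℝ) × ((Fin n → ℝ) × ℝ) => χ q.1) :=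
        hχd.continuous.comp continuous_fst
      exact ((a1.sub a2).sub a3.continuousOn).sub a4.continuousOn)
  have hz₁ : z₁ ∈ S := hz₁
  have hz₂ : z₂ ∈ S := hz₂
  have hmax : ∀ a ∈ S, ∀ b ∈ S, w₁ a - w₂ b - k * QQ (a - b) - χ a ≤
      w₁ z₁ - w₂ z₂ - k * QQ (z₁ - z₂) - χ z₁ := fun a ha b hb =>
    hmax (show (a, b) ∈ S ×ˢ S from ⟨ha, hb⟩)
  have hQ0 : QQ (0 : (Fin n → ℝ) × ℝ) = 0 := by simp [QQ]
  have hmax0 := hmax p₀ hp₀S p₀ hp₀S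
  have hmax2 := hmax z₂ hz₂ z₂ hz₂
  rw [sub_self, hQ0] at hmax0 hmax2
  have hQnn : 0 ≤ k * QQ (z₁ - z₂) :=
    mul_nonneg hk0.le ((sq_nonneg _).trans (sq_norm_le_QQ _))
  have hdist : dist z₁ z₂ < δ := by
    have h1 : k * QQ (z₁ - z₂) ≤ 2 * B := by
      have := (abs_le.1 (hB z₁ hz₁)).2
      have := (abs_le.1 (hB z₂ hz₂)).1
      linarith
    have h2 := sq_norm_le_QQ (z₁ - z₂)
    have h3 : k * ‖z₁ - z₂‖ ^ 2 ≤ k * QQ (z₁ - z₂) := by gcongr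
    have h4 : k * δ ^ 2 = 2 * B + 1 := by rw [hk]; field_simp
    rw [dist_eq_norm]
    by_contra h
    push Not at h
    have h5 : k * δ ^ 2 ≤ k * ‖z₁ - z₂‖ ^ 2 := by gcongr
    linarith
  have v₁ := abs_lt.1 (u₁ z₁ hz₁ z₂ hz₂ (hdist.trans_le ((min_le_left _ _).trans (min_le_left _ _))))
  have v₂ := abs_lt.1 (u₂ z₁ hz₁ z₂ hz₂ (hdist.trans_le ((min_le_left _ _).trans (min_le_right _ _))))
  have v₃ := abs_lt.1 (u₃ z₁ hz₁ z₂ hz₂ (hdist.trans_le ((min_le_right _ _).trans (min_le_left _ _))))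
  have v₄ := abs_lt.1 (u₄ z₁ hz₁ z₂ hz₂ (hdist.trans_le ((min_le_right _ _).trans (min_le_right _ _))))
  have hkQ : k * QQ (z₁ - z₂) ≤ 2 * e := by linarith [v₁.2, v₄.1]
  have hgap : G / 2 + χ z₁ < w₁ z₁ - w₂ z₂ := by linarith
  have hχ1 := hχ0 z₁ hz₁
  have hχ2 := hχ0 z₂ hz₂
  -- interior points
  have ht₁ : 0 < z₁.2 := by
    refine lt_of_le_of_ne hz₁.1 fun h => ?_
    have := hinit z₁ h.symm
    linarith [v₂.2]
  have ht₂ : 0 < z₂.2 := by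
    refine lt_of_le_of_ne hz₂.1 fun h => ?_
    have := hinit z₂ h.symm
    linarith [v₁.2]
  have hr₁ : SS c z₁ < R := by
    refine lt_of_le_of_ne hz₁.2 fun h => ?_
    have h1 := hχR z₁ h
    have := hM z₁ hz₁
    linarith [v₂.2]
  have hr₂ : SS c z₂ < R := by
    refine lt_of_le_of_ne hz₂.2 fun h => ?_
    have h1 := hχR z₂ h
    have := hM z₂ hz₂
    linarith [v₁.2, v₄.1]
  have hnhds : ∀ z : (Fin n → ℝ) × ℝ, 0 < z.2 → SS c z < R → S ∈ 𝓝 z := by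
    intro z h1 h2
    have a1 : {z : (Fin n → ℝ) × ℝ | 0 < z.2} ∈ 𝓝 z :=
      (isOpen_lt continuous_const continuous_snd).mem_nhds h1
    have a2 : {z : (Fin n → ℝ) × ℝ | SS c z < R} ∈ 𝓝 z :=
      (isOpen_lt (SS_contDiff c).continuous continuous_const).mem_nhds h2
    filter_upwards [a1, a2] with q hq1 hq2
    exact ⟨le_of_lt hq1, le_of_lt hq2⟩
  have hQd : Differentiable ℝ (QQ (n := n)) := QQ_contDiff.differentiable (by norm_num)
  -- test functions
  have hlmax : IsLocalMax (fun q => w₁ q - (k * QQ (q - z₂) + χ q)) z₁ := by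
    filter_upwards [hnhds z₁ ht₁ hr₁] with q hq
    have := hmax q hq z₂ hz₂
    linarith
  have hlmin : IsLocalMin (fun q => w₂ q - (-(k * QQ (z₁ - q)))) z₂ := by
    filter_upwards [hnhds z₂ ht₂ hr₂] with q hq
    have := hmax z₁ hz₁ q hq
    linarith
  obtain ⟨s1, s2⟩ := hsub z₁ ht₁ _ ((contDiff_const.mul
    (QQ_contDiff.comp (contDiff_id.sub contDiff_const))).add hχd) hlmax
  rcases hsup z₂ ht₂ _ ((contDiff_const.mul
    (QQ_contDiff.comp (contDiff_const.sub contDiff_id))).neg) hlmin with s3 | s3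
  swap
  · linarith [v₃.2]
  have d1 : ∀ v, fderiv ℝ (fun q => k * QQ (q - z₂) + χ q) z₁ v =
      k * fderiv ℝ QQ (z₁ - z₂) v + fderiv ℝ χ z₁ v := by
    intro v
    have a1 : HasFDerivAt (fun q : (Fin n → ℝ) × ℝ => QQ (q - z₂)) (fderiv ℝ QQ (z₁ - z₂)) z₁ := by
      have := (hQd (z₁ - z₂)).hasFDerivAt.comp z₁ ((hasFDerivAt_id z₁).sub_const z₂)
      rw [ContinuousLinearMap.comp_id] at this
      exact this
    have a2 := (a1.const_mul k).add (hχd.differentiable (by norm_num) z₁).hasFDerivAt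
    have a3 : fderiv ℝ (fun q => k * QQ (q - z₂) + χ q) z₁ = _ := a2.fderiv
    rw [a3]
    simp
  have d2 : ∀ v, fderiv ℝ (fun q => -(k * QQ (z₁ - q))) z₂ v =
      k * fderiv ℝ QQ (z₁ - z₂) v := by
    intro v
    have a1 := (hQd (z₁ - z₂)).hasFDerivAt.comp z₂ ((hasFDerivAt_id z₂).const_sub z₁)
    have a2 := (a1.const_mul k).neg
    have a3 : fderiv ℝ (fun q => -(k * QQ (z₁ - q))) z₂ = _ := a2.fderiv
    rw [a3]
    simp
  have s1' : fderiv ℝ (fun q => k * QQ (q - z₂) + χ q) z₁ (0, 1) ≤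
    sSup ((fun u => fderiv ℝ (fun q => k * QQ (q - z₂) + χ q) z₁ (f z₁.1 u, 0)) '' U) := s1
  have s3' : sSup ((fun u => fderiv ℝ (fun q => -(k * QQ (z₁ - q))) z₂ (f z₂.1 u, 0)) '' U) ≤
    fderiv ℝ (fun q => -(k * QQ (z₁ - q))) z₂ (0, 1) := s3
  have hb2 := H.bddAbove z₂.1 (fderiv ℝ (fun q => -(k * QQ (z₁ - q))) z₂)
  have hfin : sSup ((fun u => fderiv ℝ (fun q => k * QQ (q - z₂) + χ q) z₁ (f z₁.1 u, 0)) '' U) ≤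
      k * fderiv ℝ QQ (z₁ - z₂) (0, 1) + 4 * n * K * e + fderiv ℝ χ z₁ (0, 1) - η := by
    apply csSup_le (H.ne.image _)
    rintro _ ⟨u, hu, rfl⟩
    have b1 := (le_csSup hb2 ⟨u, hu, rfl⟩).trans s3'
    simp only [d2] at b1
    simp only [d1]
    have b2 := hdrift z₁ hz₁ u hu
    have b3 : fderiv ℝ QQ (z₁ - z₂) (f z₁.1 u, 0) - fderiv ℝ QQ (z₁ - z₂) (f z₂.1 u, 0) ≤
        2 * n * K * QQ (z₁ - z₂) := by
      rw [← map_sub, QQ_fderiv]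
      have c1 := sum_mul_le (z₁ - z₂).1 (f z₁.1 u - f z₂.1 u)
      have c2 := H.lip z₁.1 z₂.1 u hu
      have c3 : ‖(z₁ - z₂).1‖ ^ 2 ≤ QQ (z₁ - z₂) := by
        refine le_trans ?_ (sq_norm_le_QQ _)
        gcongr
        exact norm_fst_le _
      have c4 : 2 * n * ‖(z₁ - z₂).1‖ * ‖f z₁.1 u - f z₂.1 u‖ ≤
          2 * n * ‖(z₁ - z₂).1‖ * (K * ‖(z₁ - z₂).1‖) := by
        gcongr
        exact c2
      have c5 : 2 * n * K * ‖(z₁ - z₂).1‖ ^ 2 ≤ 2 * n * K * QQ (z₁ - z₂) := by gcongr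
      simp only [Prod.mk_sub_mk, sub_self, mul_zero, add_zero]
      calc _ ≤ _ := c1
        _ ≤ _ := c4
        _ = 2 * n * K * ‖(z₁ - z₂).1‖ ^ 2 := by ring
        _ ≤ _ := c5
    have b4 : k * (fderiv ℝ QQ (z₁ - z₂) (f z₁.1 u, 0) - fderiv ℝ QQ (z₁ - z₂) (f z₂.1 u, 0)) ≤
        k * (2 * n * K * QQ (z₁ - z₂)) := by gcongr
    have b5 : 2 * n * K * (k * QQ (z₁ - z₂)) ≤ 2 * n * K * (2 * e) := by gcongr
    linarith
  rw [d1] at s1'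
  linarith

end compare

theorem beta_contract {α : ℝ → ℝ} (hα : IsLocallyLipschitzClassK α) {β : ℝ → ℝ → ℝ}
    (hβ : IsBetaFor α β) {r r' t : ℝ} (hr : 0 ≤ r) (hr' : 0 ≤ r') (ht : 0 ≤ t) :
    |β r t - β r' t| ≤ |r - r'| := by
  obtain ⟨b0, hb⟩ := hβ r hr
  obtain ⟨b0', hb'⟩ := hβ r' hr'
  have hmono := hα.1.2.1.monotoneOn
  have hd : ∀ t, 0 ≤ t → HasDerivWithinAt (fun t => (β r t - β r' t) ^ 2)
      (2 * (β r t - β r' t) * (-α (β r t) - -α (β r' t))) (Ici 0) t := by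
    intro t ht
    have h2 := ((hb t ht).2.2.fun_sub (hb' t ht).2.2).fun_pow 2
    refine h2.congr_deriv ?_
    norm_num
  have hanti : AntitoneOn (fun t => (β r t - β r' t) ^ 2) (Ici 0) := by
    apply antitoneOn_of_deriv_nonpos (convex_Ici 0)
    · exact fun t ht => (hd t ht).continuousWithinAt
    · intro t ht
      rw [interior_Ici] at ht
      exact ((hd t (le_of_lt ht)).hasDerivAt (Ici_mem_nhds ht)).differentiableAt.differentiableWithinAt
    · intro t ht
      rw [interior_Ici] at ht
      rw [((hd t (le_of_lt ht)).hasDerivAt (Ici_mem_nhds ht)).deriv]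
      have h1 : 0 ≤ β r t := (hb t (le_of_lt ht)).1
      have h2 : 0 ≤ β r' t := (hb' t (le_of_lt ht)).1
      rcases le_total (β r t) (β r' t) with h | h
      · have := hmono h1 h2 h
        nlinarith
      · have := hmono h2 h1 h
        nlinarith
  have h := hanti (Set.mem_Ici.2 le_rfl) (Set.mem_Ici.2 ht) ht
  simp only [b0, b0'] at h
  exact sq_le_sq.1 h

theorem beta_cont {α : ℝ → ℝ} (hα : IsLocallyLipschitzClassK α) {β : ℝ → ℝ → ℝ}
    (hβ : IsBetaFor α β) {n : ℕ} {g : (Fin n → ℝ) → ℝ} (hg : Continuous g) (hg0 : ∀ x, 0 ≤ g x) :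
    ContinuousOn (fun p : (Fin n → ℝ) × ℝ => β (g p.1) p.2) {p : (Fin n → ℝ) × ℝ | 0 ≤ p.2} := by
  rintro ⟨x, T⟩ hT
  have hT : 0 ≤ T := hT
  have h1 : ContinuousWithinAt (fun p : (Fin n → ℝ) × ℝ => β (g x) p.2)
      {p : (Fin n → ℝ) × ℝ | 0 ≤ p.2} (x, T) :=
    ((hβ (g x) (hg0 x)).2 T hT).2.2.continuousWithinAt.comp
      (f := fun p : (Fin n → ℝ) × ℝ => p.2) continuous_snd.continuousWithinAt (fun p hp => hp)
  have h2 : Tendsto (fun p : (Fin n → ℝ) × ℝ => β (g p.1) p.2 - β (g x) p.2)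
      (𝓝[{p : (Fin n → ℝ) × ℝ | 0 ≤ p.2}] (x, T)) (𝓝 0) := by
    have h3 : Tendsto (fun p : (Fin n → ℝ) × ℝ => |g p.1 - g x|)
        (𝓝[{p : (Fin n → ℝ) × ℝ | 0 ≤ p.2}] (x, T)) (𝓝 0) := by
      have : Continuous (fun p : (Fin n → ℝ) × ℝ => |g p.1 - g x|) := by fun_prop
      have h4 := this.tendsto (x, T)
      simp only [sub_self, abs_zero] at h4
      exact h4.mono_left nhdsWithin_le_nhds
    refine squeeze_zero_norm' ?_ h3
    filter_upwards [self_mem_nhdsWithin] with p hp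
    exact beta_contract hα hβ (hg0 _) (hg0 _) hp
  have h5 := h2.add h1
  simp only [sub_add_cancel, zero_add] at h5
  exact h5

theorem exists_FHyp {n m : ℕ}
    (f : (Fin n → ℝ) → (Fin m → ℝ) → Fin n → ℝ) (U : Set (Fin m → ℝ))
    (hU : IsCompact U) (hUne : U.Nonempty)
    (hf : ∃ K : NNReal, LipschitzOnWith K (Function.uncurry f) (Set.univ ×ˢ U)) :
    ∃ K C, FHyp f U K C := by
  obtain ⟨K, hK⟩ := hf
  have hc : ContinuousOn (fun u => f 0 u) U :=
    hK.continuousOn.comp (f := fun u => ((0 : Fin n → ℝ), u)) (by fun_prop)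
      (fun u hu => ⟨trivial, hu⟩)
  obtain ⟨C, hC⟩ := hU.exists_bound_of_continuousOn hc
  refine ⟨K, C, K.2, ?_, ?_, hC, hK.continuousOn, hUne⟩
  · obtain ⟨u, hu⟩ := hUne
    exact (norm_nonneg _).trans (hC u hu)
  · intro x y u hu
    have := hK.dist_le_mul (x, u) ⟨trivial, hu⟩ (y, u) ⟨trivial, hu⟩
    simpa [Function.uncurry, Prod.dist_eq, dist_eq_norm] using this


theorem cbvf_eq {n m : ℕ} (f : (Fin n → ℝ) → (Fin m → ℝ) → Fin n → ℝ) (U : Set (Fin m → ℝ))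
    (β : ℝ → ℝ → ℝ) (g : (Fin n → ℝ) → ℝ) :
    (fun p : (Fin n → ℝ) × ℝ => cbvfPayoff f U β g p.1 p.2) =
      fun p => WW f U (fun p => β (g p.1) p.2) p.1 p.2 := by
  funext p
  simp only [cbvfPayoff, WW, JJ]

theorem FHyp.visc_WW {n m : ℕ} {f : (Fin n → ℝ) → (Fin m → ℝ) → Fin n → ℝ}
    {U : Set (Fin m → ℝ)} {K C : ℝ} (H : FHyp f U K C) {β : ℝ → ℝ → ℝ} {g : (Fin n → ℝ) → ℝ}
    {ψ : (Fin n → ℝ) × ℝ → ℝ} (hψ : ∀ p, ψ p = β (g p.1) p.2)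
    (hψ0 : ∀ p : (Fin n → ℝ) × ℝ, 0 ≤ p.2 → 0 ≤ ψ p)
    (hψc : ContinuousOn ψ {p : (Fin n → ℝ) × ℝ | 0 ≤ p.2}) :
    IsViscositySolnW f U β g (fun p => WW f U ψ p.1 p.2) := by
  constructor
  · intro p hT φ hφ hmax
    obtain ⟨x, T⟩ := p
    have hD := (hφ.differentiable one_ne_zero (x, T)).hasFDerivAt
    have h1 := H.visc_sub hψ0 hT hD hmax
    have h2 : WW f U ψ x T ≤ ψ (x, T) := H.WW_le_psi hψ0 (le_of_lt hT)
    rw [← hψ (x, T)]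
    exact max_le (sub_nonpos.2 h1) (sub_nonpos.2 h2)
  · intro p hT φ hφ hmin
    obtain ⟨x, T⟩ := p
    have hD := (hφ.differentiable one_ne_zero (x, T)).hasFDerivAt
    rw [← hψ (x, T)]
    rcases lt_or_ge (WW f U ψ x T) (ψ (x, T)) with h | h
    · exact le_max_of_le_left (sub_nonneg.2 (H.visc_super hψ0 hψc hT hD hmin h))
    · exact le_max_of_le_right (sub_nonneg.2 h)

theorem FHyp.compare_soln {n m : ℕ} {f : (Fin n → ℝ) → (Fin m → ℝ) → Fin n → ℝ}
    {U : Set (Fin m → ℝ)} {K C : ℝ} (H : FHyp f U K C) {β : ℝ → ℝ → ℝ} {g : (Fin n → ℝ) → ℝ}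
    {ψ : (Fin n → ℝ) × ℝ → ℝ} (hψ : ∀ p, ψ p = β (g p.1) p.2)
    (hψc : ContinuousOn ψ {p : (Fin n → ℝ) × ℝ | 0 ≤ p.2})
    {w₁ w₂ : (Fin n → ℝ) × ℝ → ℝ}
    (hc₁ : ContinuousOn w₁ {p : (Fin n → ℝ) × ℝ | 0 ≤ p.2})
    (hc₂ : ContinuousOn w₂ {p : (Fin n → ℝ) × ℝ | 0 ≤ p.2})
    (h₁ : ∀ x : Fin n → ℝ, w₁ (x, 0) = g x) (h₂ : ∀ x : Fin n → ℝ, w₂ (x, 0) = g x)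
    (hv₁ : IsViscositySolnW f U β g w₁) (hv₂ : IsViscositySolnW f U β g w₂) :
    ∀ p : (Fin n → ℝ) × ℝ, 0 ≤ p.2 → w₁ p ≤ w₂ p := by
  refine H.compare hψc hc₁ hc₂ ?_ ?_ ?_
  · rintro ⟨x, T⟩ hT
    have hT : T = 0 := hT
    subst hT
    rw [h₁, h₂]
  · intro p hp φ hφ hmax
    have := max_le_iff.1 (hv₁.1 p hp φ hφ hmax)
    rw [← hψ p] at this
    exact ⟨sub_nonpos.1 this.1, sub_nonpos.1 this.2⟩
  · intro p hp φ hφ hmin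
    have := hv₂.2 p hp φ hφ hmin
    rw [← hψ p] at this
    rcases le_max_iff.1 this with h | h
    · exact Or.inl (sub_nonneg.1 h)
    · exact Or.inr (sub_nonneg.1 h)

/-- The function `w (x,T) = sup_{(u,ξ)} min_{t ∈ [0,T]} β_α (g (ξ t)) (T-t)`
is continuous on `ℝⁿ × [0,∞)`, satisfies `w (·,0) = g`, and is the unique continuous
nonnegative function with this initial condition that is a viscosity solution on
`ℝⁿ × (0,∞)` of `max { ∂_T w - H(x,∇w), w - β_α (g x) T } = 0`. -/
theorem w_is_unique_viscosity_solution {n m : ℕ}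
    (f : (Fin n → ℝ) → (Fin m → ℝ) → Fin n → ℝ) (U : Set (Fin m → ℝ))
    (hU : IsCompact U) (hUne : U.Nonempty)
    (hf : ∃ K : NNReal, LipschitzOnWith K (Function.uncurry f) (Set.univ ×ˢ U))
    (α : ℝ → ℝ) (hα : IsLocallyLipschitzClassK α)
    (β : ℝ → ℝ → ℝ) (hβ : IsBetaFor α β)
    (g : (Fin n → ℝ) → ℝ) (hg : Continuous g) (hg0 : ∀ x, 0 ≤ g x) :
    ContinuousOn (fun p : (Fin n → ℝ) × ℝ => cbvfPayoff f U β g p.1 p.2)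
      {p : (Fin n → ℝ) × ℝ | 0 ≤ p.2} ∧
    (∀ x : Fin n → ℝ, cbvfPayoff f U β g x 0 = g x) ∧
    IsViscositySolnW f U β g (fun p => cbvfPayoff f U β g p.1 p.2) ∧
    ∀ w' : (Fin n → ℝ) × ℝ → ℝ,
      ContinuousOn w' {p : (Fin n → ℝ) × ℝ | 0 ≤ p.2} →
      (∀ p : (Fin n → ℝ) × ℝ, 0 ≤ p.2 → 0 ≤ w' p) →
      (∀ x : Fin n → ℝ, w' (x, 0) = g x) →
      IsViscositySolnW f U β g w' →
      ∀ p : (Fin n → ℝ) × ℝ, 0 ≤ p.2 → w' p = cbvfPayoff f U β g p.1 p.2 := by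
  obtain ⟨K, C, H⟩ := exists_FHyp f U hU hUne hf
  obtain ⟨ψ, hψdef⟩ : ∃ ψ : (Fin n → ℝ) × ℝ → ℝ, ψ = fun p => β (g p.1) p.2 := ⟨_, rfl⟩
  have hψ : ∀ p, ψ p = β (g p.1) p.2 := fun p => by rw [hψdef]
  have hψc : ContinuousOn ψ {p : (Fin n → ℝ) × ℝ | 0 ≤ p.2} := by
    rw [hψdef]; exact beta_cont hα hβ hg hg0
  have hψ0 : ∀ p : (Fin n → ℝ) × ℝ, 0 ≤ p.2 → 0 ≤ ψ p := fun p hp => by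
    rw [hψ]; exact ((hβ (g p.1) (hg0 p.1)).2 p.2 hp).1
  have hW : (fun p : (Fin n → ℝ) × ℝ => cbvfPayoff f U β g p.1 p.2) =
      fun p => WW f U ψ p.1 p.2 := by
    rw [hψdef]; exact cbvf_eq f U β g
  have hcont := H.WW_cont hψ0 hψc
  have hvisc : IsViscositySolnW f U β g (fun p => WW f U ψ p.1 p.2) := H.visc_WW hψ hψ0 hψc
  have hzero : ∀ x : Fin n → ℝ, WW f U ψ x 0 = g x := fun x => by
    rw [H.WW_zero hψ0, hψ]
    exact (hβ (g x) (hg0 x)).1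
  have hWp : ∀ x T, cbvfPayoff f U β g x T = WW f U ψ x T := fun x T => congrFun hW (x, T)
  rw [hW]
  refine ⟨hcont, fun x => (hWp x 0).trans (hzero x), hvisc, fun w' hc' _ h0' hv' p hp => ?_⟩
  rw [hWp]
  exact le_antisymm (H.compare_soln hψ hψc hc' hcont h0' hzero hv' hvisc p hp)
    (H.compare_soln hψ hψc hcont hc' hzero h0' hvisc hv' p hp)
end
end

section
/- Consider the system on ℝ² with admissible control set U = {−1, +1} and dynamics f((x₁,x₂), u) = (0, u) if x₁² + x₂² ≤ 1, and f((x₁,x₂), u) = ( x₁(1 − s)/s , x₂(1 − s)/s + u ) with s = √(x₁² + x₂²) if x₁² + x₂² > 1. Then the continuously differentiable function h(x₁,x₂) = 1 − x₁² − x₂² satisfies the CBF inequality everywhere: for all (x₁,x₂) ∈ ℝ², max_{u ∈ {−1,+1}} ∇h(x₁,x₂) · f((x₁,x₂), u) ≥ −h(x₁,x₂). -/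
open Set Filter MeasureTheory Topology

noncomputable section

/-- The piecewise dynamics of the counter-example: `f ((x₁,x₂), u) = (0, u)` inside the
closed unit disk, and
`f ((x₁,x₂), u) = (x₁ (1 - s)/s, x₂ (1 - s)/s + u)` with `s = √(x₁² + x₂²)` outside. -/
noncomputable def fCE (x : ℝ × ℝ) (u : ℝ) : ℝ × ℝ :=
  if x.1 ^ 2 + x.2 ^ 2 ≤ 1 then (0, u)
  else (x.1 * (1 - Real.sqrt (x.1 ^ 2 + x.2 ^ 2)) / Real.sqrt (x.1 ^ 2 + x.2 ^ 2),
        x.2 * (1 - Real.sqrt (x.1 ^ 2 + x.2 ^ 2)) / Real.sqrt (x.1 ^ 2 + x.2 ^ 2) + u)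

/-- For the counter-example system with `U = {-1, +1}`, the function
`h (x₁,x₂) = 1 - x₁² - x₂²` satisfies the CBF inequality everywhere:
`max_{u ∈ {-1,+1}} ∇h(x) · f(x,u) ≥ -h x` for all `x ∈ ℝ²`. -/
theorem counterexample_cbf_inequality (x : ℝ × ℝ) :
    -(1 - x.1 ^ 2 - x.2 ^ 2) ≤
      max (fderiv ℝ (fun y : ℝ × ℝ => 1 - y.1 ^ 2 - y.2 ^ 2) x (fCE x (-1)))
          (fderiv ℝ (fun y : ℝ × ℝ => 1 - y.1 ^ 2 - y.2 ^ 2) x (fCE x 1)) := by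
  have hd : ∀ v : ℝ × ℝ, fderiv ℝ (fun y : ℝ × ℝ => 1 - y.1 ^ 2 - y.2 ^ 2) x v
      = -2 * x.1 * v.1 - 2 * x.2 * v.2 := by
    intro v
    have h1 : HasFDerivAt (fun y : ℝ × ℝ => y.1) (ContinuousLinearMap.fst ℝ ℝ ℝ) x :=
      hasFDerivAt_fst
    have h2 : HasFDerivAt (fun y : ℝ × ℝ => y.2) (ContinuousLinearMap.snd ℝ ℝ ℝ) x :=
      hasFDerivAt_snd
    have h := ((h1.pow 2).const_sub 1).sub (h2.pow 2)
    have e := h.fderiv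
    have e2 : fderiv ℝ (fun y : ℝ × ℝ => 1 - y.1 ^ 2 - y.2 ^ 2) x = _ := e
    rw [e2]
    simp
  rw [hd, hd]
  by_cases hx : x.1 ^ 2 + x.2 ^ 2 ≤ 1
  · simp only [fCE, if_pos hx]
    rcases le_total 0 x.2 with h | h
    · exact le_max_of_le_left (by linarith)
    · exact le_max_of_le_right (by linarith)
  · simp only [fCE, if_neg hx]
    have hs2 : Real.sqrt (x.1 ^ 2 + x.2 ^ 2) ^ 2 = x.1 ^ 2 + x.2 ^ 2 :=
      Real.sq_sqrt (by positivity)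
    have hs : 0 < Real.sqrt (x.1 ^ 2 + x.2 ^ 2) := Real.sqrt_pos.2 (by linarith)
    generalize Real.sqrt (x.1 ^ 2 + x.2 ^ 2) = s at hs hs2
    have key : x.1 * (x.1 * (1 - s) / s) + x.2 * (x.2 * (1 - s) / s) = s * (1 - s) := by
      have : x.1 * (x.1 * (1 - s) / s) + x.2 * (x.2 * (1 - s) / s)
          = (x.1 ^ 2 + x.2 ^ 2) * (1 - s) / s := by ring
      rw [this, ← hs2]
      field_simp
    rcases le_total 0 x.2 with h | h
    · exact le_max_of_le_left (by nlinarith [sq_nonneg (s - 1)])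
    · exact le_max_of_le_right (by nlinarith [sq_nonneg (s - 1)])
end
end

section
/- Consider the system on ℝ² with admissible control set U = {−1, +1} and dynamics f((x₁,x₂), u) = (0, u) if x₁² + x₂² ≤ 1, and f((x₁,x₂), u) = ( x₁(1 − s)/s , x₂(1 − s)/s + u ) with s = √(x₁² + x₂²) if x₁² + x₂² > 1. Then the closed unit disk {(x₁,x₂) : x₁² + x₂² ≤ 1} is not control invariant: for every measurable u : [0,∞) → {−1,+1} and every continuous ξ : [0,∞) → ℝ² satisfying ξ(t) = (1,0) + ∫₀ᵗ f(ξ(s), u(s)) ds for all t ≥ 0, there exists t ≥ 0 with ξ(t)₁² + ξ(t)₂² > 1. -/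
open Set Filter MeasureTheory Topology

noncomputable section

/-- For the counter-example system, the closed unit disk is not control
invariant: every admissible trajectory starting from `(1,0)` must eventually leave the disk. -/
theorem counterexample_not_control_invariant
    (u : ℝ → ℝ) (hu : Measurable u) (huU : ∀ t : ℝ, 0 ≤ t → u t ∈ ({-1, 1} : Set ℝ))
    (ξ : ℝ → ℝ × ℝ) (hξc : Continuous ξ)
    (hξ : ∀ t : ℝ, 0 ≤ t → ξ t = ((1 : ℝ), (0 : ℝ)) + ∫ s in (0 : ℝ)..t, fCE (ξ s) (u s)) :
    ∃ t : ℝ, 0 ≤ t ∧ 1 < (ξ t).1 ^ 2 + (ξ t).2 ^ 2 := by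
  by_contra hcon
  push Not at hcon
  have hbd : ∀ t : ℝ, 0 ≤ t → ‖u t‖ ≤ 1 := by
    intro t ht
    rcases huU t ht with h | h
    · rw [h]; simp
    · rw [Set.mem_singleton_iff.mp h]; simp
  have hint : ∀ t : ℝ, 0 ≤ t → IntervalIntegrable u volume 0 t := by
    intro t ht
    rw [intervalIntegrable_iff_integrableOn_Ioc_of_le ht]
    refine Measure.integrableOn_of_bounded (M := 1) (by simp) hu.aestronglyMeasurable ?_
    refine (ae_restrict_iff' measurableSet_Ioc).mpr (Eventually.of_forall ?_)
    intro s hs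
    exact hbd s hs.1.le
  have hpint : ∀ t : ℝ, 0 ≤ t →
      IntervalIntegrable (fun s => ((0 : ℝ), u s)) volume 0 t := by
    intro t ht
    have h := hint t ht
    rw [intervalIntegrable_iff_integrableOn_Ioc_of_le ht] at h ⊢
    exact (integrable_zero ℝ ℝ _).prodMk h
  have hzero : ∀ t : ℝ, 0 ≤ t → ∫ s in (0 : ℝ)..t, u s = 0 := by
    intro t ht
    have h1 : ∫ s in (0 : ℝ)..t, fCE (ξ s) (u s) = ∫ s in (0 : ℝ)..t, ((0 : ℝ), u s) := by
      refine intervalIntegral.integral_congr ?_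
      intro s hs
      rw [uIcc_of_le ht] at hs
      have := hcon s hs.1
      simp [fCE, this]
    have hfst := (ContinuousLinearMap.fst ℝ ℝ ℝ).intervalIntegral_comp_comm (hpint t ht)
    have hsnd := (ContinuousLinearMap.snd ℝ ℝ ℝ).intervalIntegral_comp_comm (hpint t ht)
    simp only [ContinuousLinearMap.coe_fst', ContinuousLinearMap.coe_snd',
      intervalIntegral.integral_zero] at hfst hsnd
    have h2 := hcon t ht
    rw [hξ t ht, h1, Prod.fst_add, Prod.snd_add, ← hfst, ← hsnd] at h2
    have h3 : (∫ s in (0 : ℝ)..t, u s) ^ 2 ≤ 0 := by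
      simp only [add_zero, zero_add] at h2
      linarith
    exact pow_eq_zero_iff (two_ne_zero) |>.mp (le_antisymm h3 (sq_nonneg _))
  have hae := (hint 1 zero_le_one).ae_hasDerivAt_integral
  have hex : ∃ x ∈ Ioo (0 : ℝ) 1, x ∈ uIcc (0 : ℝ) 1 →
      ∀ c ∈ uIcc (0 : ℝ) 1, HasDerivAt (fun y => ∫ s in c..y, u s) (u x) x := by
    by_contra hno
    push Not at hno
    have hsub : Ioo (0 : ℝ) 1 ⊆ {x | ¬ (x ∈ uIcc (0 : ℝ) 1 →
      ∀ c ∈ uIcc (0 : ℝ) 1, HasDerivAt (fun y => ∫ s in c..y, u s) (u x) x)} := by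
      intro x hx hx'
      obtain ⟨h, c, hc, hd⟩ := hno x hx
      exact hd (hx' h c hc)
    have := measure_mono_null hsub (ae_iff.mp hae)
    simp at this
  obtain ⟨x, hx, hd⟩ := hex
  have hd := hd (by rw [uIcc_of_le zero_le_one]; exact ⟨hx.1.le, hx.2.le⟩) 0 left_mem_uIcc
  have hd0 : HasDerivAt (fun y => ∫ s in (0 : ℝ)..y, u s) 0 x := by
    refine (hasDerivAt_const x (0 : ℝ)).congr_of_eventuallyEq ?_
    filter_upwards [lt_mem_nhds hx.1] with y hy
    exact hzero y hy.le
  have hux : u x = 0 := hd.unique hd0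
  rcases huU x hx.1.le with h | h
  · rw [h] at hux; norm_num at hux
  · rw [Set.mem_singleton_iff.mp h] at hux; norm_num at hux
end
end
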